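/- arXiv:2509.13264 — 4 statements merged into one kernel-verified Lean document; each statement's English description precedes it below -/
import Mathlib

section
/- Let t ≥ 3 be an odd integer. For every bar-partition λ, sgn(λ) = sgn(λ_(t̄))·sgn(λ^[t̄]), where λ_(t̄) is the t-bar core and λ^[t̄] the t-bar cocore of λ. -/
/-!
The doubled abacus of a bar-partition records each part `a` by a bead at `a` and a gap at `-a`, and
each missing part by a gap at `a` and a bead at `-a`. On it, every `t`-bar removal is the slide of a
bead from `x` to a gap at `x - t`, accompanied by its mirror image from `t - x` to `-x`. Distinct
slides do not interfere, so bar removal is confluent and the bar core is unique.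

If two bar-partitions have the same `t`-bar quotient, then shifting the runners gives a permutation
of `ℤ` which commutes with `x ↦ -x` and `x ↦ x - t` and carries one doubled abacus to the other.
Such a permutation transports slides: the slides reducing the cocore `μ` to the empty bar-partition
can be copied on `λ`, and they end at a bar-partition admitting no slide, which is the core `κ`.
For odd `t` a slide from `x` negates the sign unless `x = t`, and `t` is fixed by the permutation.
Hence a slide and its copy change the sign by the same factor, so `sgn λ * sgn μ = sgn κ * sgn ∅`.
-/

open scoped BigOperators

/-- A bar-partition: a finite set of distinct positive parts. -/
structure BarPartition where
  parts : Finset ℕ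
  zero_not_mem : 0 ∉ parts

namespace BarPartition

/-- The size `|λ|` of a bar-partition: the sum of its parts. -/
def size (l : BarPartition) : ℕ := ∑ a ∈ l.parts, a

/-- The length `ℓ(λ)` of a bar-partition: its number of parts. -/
def length (l : BarPartition) : ℕ := l.parts.card

/-- The sign `sgn(λ) = (-1)^(|λ| - ℓ(λ))` of a bar-partition. -/
def sgn (l : BarPartition) : ℤ := (-1) ^ (l.size - l.length)

/-- The empty bar-partition. -/
def empty : BarPartition := ⟨∅, by simp⟩

end BarPartition

/-- One `t`-bar removal step: replace a part `a > t` by `a - t` (if `a - t` is not already a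
part), delete a part equal to `t`, or delete two parts whose sum is `t`. -/
def BarRemoval (t : ℕ) (μ ν : BarPartition) : Prop :=
  (∃ a ∈ μ.parts, t < a ∧ a - t ∉ μ.parts ∧ ν.parts = insert (a - t) (μ.parts.erase a)) ∨
  (t ∈ μ.parts ∧ ν.parts = μ.parts.erase t) ∨
  (∃ a ∈ μ.parts, ∃ b ∈ μ.parts, a ≠ b ∧ a + b = t ∧ ν.parts = (μ.parts.erase a).erase b)

/-- A `t`-bar core: a bar-partition admitting no `t`-bar removal. -/
def IsBarCore (t : ℕ) (κ : BarPartition) : Prop := ∀ ν, ¬ BarRemoval t κ ν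

/-- `κ` is the `t`-bar core of `λ`: it is obtained from `λ` by a (maximal) sequence of `t`-bar
removals and admits no further removal. -/
def IsBarCoreOf (t : ℕ) (l κ : BarPartition) : Prop :=
  Relation.ReflTransGen (BarRemoval t) l κ ∧ IsBarCore t κ

/-- `λ` has empty `t`-bar core. -/
def HasEmptyBarCore (t : ℕ) (l : BarPartition) : Prop :=
  Relation.ReflTransGen (BarRemoval t) l BarPartition.empty

/-- The twisted runner at `r` (for `1 ≤ r ≤ (t-1)/2`) of the `t`-bar-abacus of `λ`, as a set
of integers: position `i ≥ 0` (above the fence) carries a bead iff `t*i + r` is a part of `λ`,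
and position `i < 0` (slot `j = -(i+1)` below the fence) carries a bead iff `t*j + (t - r)` is
*not* a part of `λ` (beads and empty slots of runner `t - r` are interchanged). -/
def twistedRunner (t r : ℕ) (l : BarPartition) : Set ℤ :=
  {i : ℤ | (0 ≤ i ∧ t * i.toNat + r ∈ l.parts) ∨
           (i < 0 ∧ t * (-(i + 1)).toNat + (t - r) ∉ l.parts)}

/-- Two bar-partitions have the same `t`-bar quotient: the runners `0` agree, and for each
`1 ≤ r ≤ (t-1)/2` the twisted runners differ by a shift (the shift by the unique balancing
integer produces the Frobenius symbol of the quotient component, so shift-equivalent twisted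
runners are exactly those with equal quotient component). -/
def HasSameBarQuotient (t : ℕ) (l m : BarPartition) : Prop :=
  (∀ k : ℕ, t * k ∈ l.parts ↔ t * k ∈ m.parts) ∧
  ∀ r : ℕ, 1 ≤ r → 2 * r < t →
    ∃ c : ℤ, twistedRunner t r m = (fun i => i + c) '' twistedRunner t r l

/-- `m` is the `t`-bar cocore of `l`: the unique bar-partition with empty `t`-bar core and the
same `t`-bar quotient as `l`. -/
def IsBarCocoreOf (t : ℕ) (l m : BarPartition) : Prop :=
  HasEmptyBarCore t m ∧ HasSameBarQuotient t l m

/-- A fixed algebraic closure of `ℚ`. -/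
abbrev Qbar := AlgebraicClosure ℚ

/-- `σ` is a `σ_p`-type automorphism of `ℚ̄`: it raises every root of unity of order coprime
to `p` to its `p`-th power, and fixes every root of unity of `p`-power order. -/
def IsSigmaPType (p : ℕ) (σ : Qbar ≃ₐ[ℚ] Qbar) : Prop :=
  (∀ (ζ : Qbar) (n : ℕ), 0 < n → Nat.Coprime n p → ζ ^ n = 1 → σ ζ = ζ ^ p) ∧
  (∀ (ζ : Qbar) (k : ℕ), ζ ^ (p ^ k) = 1 → σ ζ = ζ)

/-- The discriminant `D_λ` attached to a bar-partition `λ` of `n` with `k` parts: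
`2·(−1)^((n−k+1)/2)·λ₁⋯λ_k` if `n − k` is odd, and `(−1)^((n−k)/2)·λ₁⋯λ_k` if `n − k` is
even. -/
def barDisc (l : BarPartition) : ℤ :=
  if (l.size - l.length) % 2 = 1 then
    2 * (-1) ^ ((l.size - l.length + 1) / 2) * ∏ a ∈ l.parts, (a : ℤ)
  else
    (-1) ^ ((l.size - l.length) / 2) * ∏ a ∈ l.parts, (a : ℤ)

attribute [ext] BarPartition

namespace BarPartition

/-! ### The doubled abacus -/

section Beads

variable (l : BarPartition) (a b : ℕ) (x : ℤ)

/-- The beads of the doubled abacus of `l`, which records each part twice: a positive integer is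
a bead iff it is a part, a negative integer is a bead iff its absolute value is not a part, and
`0` is a gap. -/
def beads : Set ℤ := {x | x.natAbs ∈ l.parts ↔ 0 ≤ x}

/-- The bar-partition obtained by removing the part `a` if it is present and adding it otherwise.
Toggling `0` does nothing. -/
def toggle : BarPartition := ⟨(symmDiff l.parts {a}).erase 0, Finset.notMem_erase _ _⟩

variable {l a b x}

theorem ne_zero_of_mem_parts (ha : a ∈ l.parts) : a ≠ 0 :=
  ne_of_mem_of_not_mem ha l.zero_not_mem

theorem mem_beads : x ∈ l.beads ↔ (x.natAbs ∈ l.parts ↔ 0 ≤ x) := Iff.rfl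

theorem natCast_mem_beads : (a : ℤ) ∈ l.beads ↔ a ∈ l.parts := by
  simp [mem_beads]

theorem zero_notMem_beads : (0 : ℤ) ∉ l.beads := by
  simp [mem_beads, l.zero_not_mem]

theorem ne_zero_of_mem_beads (hx : x ∈ l.beads) : x ≠ 0 :=
  ne_of_mem_of_not_mem hx zero_notMem_beads

theorem neg_mem_beads (hx : x ≠ 0) : -x ∈ l.beads ↔ x ∉ l.beads := by
  have hnonneg : 0 ≤ -x ↔ ¬ 0 ≤ x := by lia
  rw [mem_beads, mem_beads, Int.natAbs_neg, hnonneg]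
  tauto

theorem mem_beads_empty : x ∈ empty.beads ↔ x < 0 := by
  simp [mem_beads, empty]

theorem mem_toggle : b ∈ (l.toggle a).parts ↔ b ≠ 0 ∧ Xor (b ∈ l.parts) (b = a) := by
  simp [toggle, Finset.mem_symmDiff, Xor]

theorem mem_beads_toggle (hx : x ≠ 0) :
    x ∈ (l.toggle a).beads ↔ Xor (x ∈ l.beads) (x.natAbs = a) := by
  have : x.natAbs ≠ 0 := Int.natAbs_ne_zero.2 hx
  simp only [mem_beads, mem_toggle]
  grind

end Beads

theorem sgn_eq_prod (l : BarPartition) : l.sgn = ∏ a ∈ l.parts, (-1) ^ (a - 1) := by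
  have hpos : ∀ a ∈ l.parts, 1 ≤ a := fun a ha => Nat.one_le_iff_ne_zero.2 (ne_zero_of_mem_parts ha)
  rw [sgn, size, length, Finset.prod_pow_eq_pow_sum, Finset.sum_tsub_distrib _ hpos,
    Finset.sum_const, smul_eq_mul, mul_one]

theorem sgn_empty : empty.sgn = 1 := rfl

theorem sgn_mul_self (l : BarPartition) : l.sgn * l.sgn = 1 :=
  pow_mul_pow_eq_one _ (by norm_num)

theorem sgn_toggle (l : BarPartition) (a : ℕ) : (l.toggle a).sgn = (-1) ^ (a - 1) * l.sgn := by
  rw [sgn_eq_prod, sgn_eq_prod, toggle, Finset.prod_erase _ (by norm_num)]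
  by_cases ha : a ∈ l.parts
  · have hparts : symmDiff l.parts {a} = l.parts.erase a := by
      ext b
      grind [Finset.mem_symmDiff]
    rw [hparts, ← Finset.mul_prod_erase _ _ ha, ← mul_assoc, pow_mul_pow_eq_one _ (by norm_num),
      one_mul]
  · have hparts : symmDiff l.parts {a} = insert a l.parts := by
      ext b
      grind [Finset.mem_symmDiff]
    rw [hparts, Finset.prod_insert ha]

/-! ### Bar removals as slides -/

section Slide

variable {t : ℕ} {l m : BarPartition} {x y : ℤ}

/-- The effect of sliding a bead of the doubled abacus from `x` to `x - t`, and its mirror image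
from `t - x` to `-x`. It toggles both positions whether or not the slide is possible. -/
def slide (t : ℕ) (l : BarPartition) (x : ℤ) : BarPartition :=
  (l.toggle x.natAbs).toggle (x - t).natAbs

/-- The bead at `x` of the doubled abacus can slide down to the gap `x - t`. -/
def Slidable (t : ℕ) (l : BarPartition) (x : ℤ) : Prop := x ∈ l.beads ∧ x - t ∉ l.beads

theorem mem_slide {b : ℕ} : b ∈ (l.slide t x).parts ↔
    b ≠ 0 ∧ Xor (Xor (b ∈ l.parts) (b = x.natAbs)) (b = (x - t).natAbs) := by
  simp only [slide, mem_toggle]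
  grind

theorem mem_beads_slide (hy : y ≠ 0) : y ∈ (l.slide t x).beads ↔
    Xor (Xor (y ∈ l.beads) (y.natAbs = x.natAbs)) (y.natAbs = (x - t).natAbs) := by
  rw [slide, mem_beads_toggle hy, mem_beads_toggle hy]

theorem slide_comm : (l.slide t x).slide t y = (l.slide t y).slide t x := by
  ext b
  simp only [mem_slide]
  grind

theorem slide_natCast_sub : l.slide t (t - x) = l.slide t x := by
  have h₁ : (t - x).natAbs = (x - t).natAbs := by lia
  have h₂ : (t - x - t).natAbs = x.natAbs := by lia
  ext b
  rw [mem_slide, mem_slide, h₁, h₂]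
  grind

theorem Slidable.natCast_sub (h : Slidable t l x) (hx : x ≠ t) : Slidable t l (t - x) := by
  refine ⟨?_, ?_⟩
  · rw [← neg_sub, neg_mem_beads (sub_ne_zero.2 hx)]
    exact h.2
  · rw [sub_sub_cancel_left, neg_mem_beads (ne_zero_of_mem_beads h.1), not_not]
    exact h.1

theorem sgn_slide (ht : Odd t) (hx : x ≠ 0) :
    (l.slide t x).sgn = if x = t then l.sgn else -l.sgn := by
  rw [slide, sgn_toggle, sgn_toggle, ← mul_assoc, ← pow_add]
  obtain ⟨k, rfl⟩ := ht
  split_ifs with h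
  · rw [Even.neg_one_pow (by grind), one_mul]
  · rw [Odd.neg_one_pow (by grind), neg_one_mul]

theorem parts_slide_of_lt {a : ℕ} (ha : a ∈ l.parts) (hta : t < a) (hgap : a - t ∉ l.parts) :
    (l.slide t a).parts = insert (a - t) (l.parts.erase a) := by
  have := l.zero_not_mem
  ext b
  simp only [mem_slide]
  grind

theorem parts_slide_self (ht : t ∈ l.parts) : (l.slide t t).parts = l.parts.erase t := by
  have := l.zero_not_mem
  ext b
  simp only [mem_slide]
  grind

theorem parts_slide_of_add_eq {a b : ℕ} (ha : a ∈ l.parts) (hb : b ∈ l.parts) (hab : a ≠ b)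
    (hsum : a + b = t) : (l.slide t a).parts = (l.parts.erase a).erase b := by
  have := l.zero_not_mem
  ext c
  simp only [mem_slide]
  grind

theorem _root_.BarRemoval.exists_slidable (h : BarRemoval t l m) :
    ∃ x, Slidable t l x ∧ m = l.slide t x := by
  obtain ⟨a, ha, hta, hgap, hm⟩ | ⟨ht, hm⟩ | ⟨a, ha, b, hb, hab, hsum, hm⟩ := h
  · refine ⟨a, ⟨natCast_mem_beads.2 ha, ?_⟩,
      BarPartition.ext (hm.trans (parts_slide_of_lt ha hta hgap).symm)⟩
    rwa [← Nat.cast_sub hta.le, natCast_mem_beads]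
  · refine ⟨t, ⟨natCast_mem_beads.2 ht, ?_⟩,
      BarPartition.ext (hm.trans (parts_slide_self ht).symm)⟩
    rw [sub_self]
    exact zero_notMem_beads
  · refine ⟨a, ⟨natCast_mem_beads.2 ha, ?_⟩,
      BarPartition.ext (hm.trans (parts_slide_of_add_eq ha hb hab hsum).symm)⟩
    have hsub : (a : ℤ) - t = -b := by lia
    rw [hsub, neg_mem_beads (mod_cast ne_zero_of_mem_parts hb), not_not]
    exact natCast_mem_beads.2 hb

theorem Slidable.barRemoval_natCast (ht : Odd t) {a : ℕ} (h : Slidable t l a) :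
    BarRemoval t l (l.slide t a) := by
  obtain ⟨ha, hgap⟩ := h
  rw [natCast_mem_beads] at ha
  rcases lt_trichotomy t a with hta | rfl | hat
  · rw [← Nat.cast_sub hta.le, natCast_mem_beads] at hgap
    exact .inl ⟨a, ha, hta, hgap, parts_slide_of_lt ha hta hgap⟩
  · exact .inr (.inl ⟨ha, parts_slide_self ha⟩)
  · obtain ⟨b, rfl⟩ := Nat.exists_eq_add_of_lt hat
    have hsub : (a : ℤ) - ↑(a + b + 1) = -↑(b + 1) := by push_cast; ring
    rw [hsub, neg_mem_beads (by lia), not_not, natCast_mem_beads] at hgap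
    have hne : a ≠ b + 1 := by grind
    exact .inr (.inr ⟨a, ha, b + 1, hgap, hne, rfl, parts_slide_of_add_eq ha hgap hne rfl⟩)

theorem Slidable.barRemoval (ht : Odd t) (h : Slidable t l x) : BarRemoval t l (l.slide t x) := by
  rcases le_total 0 x with hx | hx
  · lift x to ℕ using hx
    exact h.barRemoval_natCast ht
  · have hxt : x ≠ t := by grind [ne_zero_of_mem_beads h.1]
    obtain ⟨a, ha⟩ : ∃ a : ℕ, (a : ℤ) = t - x := ⟨(t - x).toNat, by lia⟩
    rw [← slide_natCast_sub, ← ha]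
    exact Slidable.barRemoval_natCast ht (ha ▸ h.natCast_sub hxt)

theorem isBarCore_iff (ht : Odd t) : IsBarCore t l ↔ ∀ x, ¬ Slidable t l x := by
  refine ⟨fun h x hx => h _ (hx.barRemoval ht), fun h m hm => ?_⟩
  obtain ⟨x, hx, -⟩ := hm.exists_slidable
  exact h x hx

theorem isBarCore_empty : IsBarCore t empty := by
  intro ν hν
  obtain ⟨x, hx, -⟩ := hν.exists_slidable
  simp only [Slidable, mem_beads_empty] at hx
  lia

end Slide

/-! ### Uniqueness of the bar core -/

section Confluence

variable {t : ℕ} {l κ κ' : BarPartition} {x y : ℤ}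

theorem Slidable.slide (hx : Slidable t l x) (hy : Slidable t l y)
    (hne : l.slide t x ≠ l.slide t y) : Slidable t (l.slide t x) y := by
  have hxy : y ≠ x := fun h => hne (by rw [h])
  have hxy' : y ≠ t - x := fun h => hne (by rw [h, slide_natCast_sub])
  have hx0 := ne_zero_of_mem_beads hx.1
  have hneg : -x ∉ l.beads := (neg_mem_beads hx0).not.2 (not_not.2 hx.1)
  refine ⟨?_, ?_⟩
  · have h₁ : y ≠ -x := ne_of_mem_of_not_mem hy.1 hneg
    have h₂ : y ≠ x - t := ne_of_mem_of_not_mem hy.1 hx.2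
    rw [mem_beads_slide (ne_zero_of_mem_beads hy.1)]
    grind [hy.1]
  · rcases eq_or_ne (y - t) 0 with h0 | h0
    · rw [h0]
      exact zero_notMem_beads
    · have h₁ : x ≠ y - t := ne_of_mem_of_not_mem hx.1 hy.2
      have h₂ : t - x ≠ y - t := by
        rcases eq_or_ne x t with rfl | hxt
        · rwa [sub_self, ne_comm]
        · exact ne_of_mem_of_not_mem (hx.natCast_sub hxt).1 hy.2
      rw [mem_beads_slide h0]
      grind [hy.2]

theorem barRemoval_diamond (ht : Odd t) {m m' : BarPartition} (h : BarRemoval t l m)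
    (h' : BarRemoval t l m') (hne : m ≠ m') : ∃ n, BarRemoval t m n ∧ BarRemoval t m' n := by
  obtain ⟨x, hx, rfl⟩ := h.exists_slidable
  obtain ⟨y, hy, rfl⟩ := h'.exists_slidable
  refine ⟨(l.slide t x).slide t y, (hx.slide hy hne).barRemoval ht, ?_⟩
  rw [slide_comm]
  exact (hy.slide hx hne.symm).barRemoval ht

theorem _root_.IsBarCore.eq_of_reflTransGen (hl : IsBarCore t l)
    (h : Relation.ReflTransGen (BarRemoval t) l κ) : l = κ := by
  obtain rfl | ⟨m, hm, -⟩ := h.cases_head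
  · rfl
  · exact absurd hm (hl m)

theorem _root_.IsBarCoreOf.unique (ht : Odd t) (h : IsBarCoreOf t l κ) (h' : IsBarCoreOf t l κ') :
    κ = κ' := by
  have hdiamond : ∀ a b c, BarRemoval t a b → BarRemoval t a c →
      ∃ d, Relation.ReflGen (BarRemoval t) b d ∧ Relation.ReflTransGen (BarRemoval t) c d := by
    intro a b c hb hc
    rcases eq_or_ne b c with rfl | hne
    · exact ⟨b, .refl, .refl⟩
    · obtain ⟨d, hbd, hcd⟩ := barRemoval_diamond ht hb hc hne
      exact ⟨d, .single hbd, .single hcd⟩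
  obtain ⟨d, hd, hd'⟩ := Relation.church_rosser hdiamond h.1 h'.1
  exact (h.2.eq_of_reflTransGen hd).trans (h'.2.eq_of_reflTransGen hd').symm

end Confluence

end BarPartition

/-! ### Abacus equivalences -/

/-- A permutation `φ` of `ℤ` commuting with negation and with translation by `t` is an abacus
equivalence from `l` to `m` if it carries the beads of the doubled abacus of `l` to those of `m`.
Such maps transport slides, and equality of the `t`-bar quotients provides one. -/
structure IsAbacusEquiv (t : ℕ) (φ : Equiv.Perm ℤ) (l m : BarPartition) : Prop where
  map_neg : ∀ x, φ (-x) = -φ x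
  map_sub : ∀ x, φ (x - t) = φ x - t
  map_mem_beads_iff : ∀ x, φ x ∈ m.beads ↔ x ∈ l.beads

namespace IsAbacusEquiv

open BarPartition

variable {t : ℕ} {φ : Equiv.Perm ℤ} {l m : BarPartition} {x : ℤ}

theorem map_zero (h : IsAbacusEquiv t φ l m) : φ 0 = 0 :=
  self_eq_neg.1 (by simpa using h.map_neg 0)

theorem map_eq_zero_iff (h : IsAbacusEquiv t φ l m) : φ x = 0 ↔ x = 0 := by
  conv_lhs => rw [← h.map_zero, φ.injective.eq_iff]

theorem map_eq_natCast_iff (h : IsAbacusEquiv t φ l m) : φ x = t ↔ x = t := by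
  rw [← sub_eq_zero, ← h.map_sub, h.map_eq_zero_iff, sub_eq_zero]

theorem natAbs_map_eq_iff (h : IsAbacusEquiv t φ l m) {y : ℤ} :
    (φ x).natAbs = (φ y).natAbs ↔ x.natAbs = y.natAbs := by
  rw [Int.natAbs_eq_natAbs_iff, Int.natAbs_eq_natAbs_iff, ← h.map_neg, φ.injective.eq_iff,
    φ.injective.eq_iff]

theorem slidable_iff (h : IsAbacusEquiv t φ l m) : Slidable t m (φ x) ↔ Slidable t l x := by
  rw [Slidable, Slidable, ← h.map_sub, h.map_mem_beads_iff, h.map_mem_beads_iff]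

theorem slide (h : IsAbacusEquiv t φ l m) (x : ℤ) :
    IsAbacusEquiv t φ (l.slide t x) (m.slide t (φ x)) where
  map_neg := h.map_neg
  map_sub := h.map_sub
  map_mem_beads_iff y := by
    rcases eq_or_ne y 0 with rfl | hy
    · rw [h.map_zero]
      exact iff_of_false zero_notMem_beads zero_notMem_beads
    · rw [mem_beads_slide hy, mem_beads_slide (h.map_eq_zero_iff.not.2 hy), ← h.map_sub,
        h.natAbs_map_eq_iff, h.natAbs_map_eq_iff, h.map_mem_beads_iff]

theorem isBarCore (h : IsAbacusEquiv t φ l m) (ht : Odd t) (hm : IsBarCore t m) :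
    IsBarCore t l := by
  rw [isBarCore_iff ht] at hm ⊢
  exact fun x hx => hm (φ x) (h.slidable_iff.2 hx)

theorem sgn_slide_mul_sgn_slide (h : IsAbacusEquiv t φ l m) (ht : Odd t) (hx : x ≠ 0) :
    (l.slide t x).sgn * (m.slide t (φ x)).sgn = l.sgn * m.sgn := by
  rw [sgn_slide ht hx, sgn_slide ht (h.map_eq_zero_iff.not.2 hx)]
  simp only [h.map_eq_natCast_iff]
  split_ifs <;> ring

theorem exists_barRemoval (h : IsAbacusEquiv t φ l m) (ht : Odd t) {m' : BarPartition}
    (hm : BarRemoval t m m') :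
    ∃ l', BarRemoval t l l' ∧ IsAbacusEquiv t φ l' m' ∧ l'.sgn * m'.sgn = l.sgn * m.sgn := by
  obtain ⟨y, hy, rfl⟩ := hm.exists_slidable
  obtain ⟨x, rfl⟩ := φ.surjective y
  have hx : Slidable t l x := h.slidable_iff.1 hy
  exact ⟨l.slide t x, hx.barRemoval ht, h.slide x,
    h.sgn_slide_mul_sgn_slide ht (ne_zero_of_mem_beads hx.1)⟩

theorem exists_reflTransGen (h : IsAbacusEquiv t φ l m) (ht : Odd t) {m' : BarPartition}
    (hm : Relation.ReflTransGen (BarRemoval t) m m') :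
    ∃ l', Relation.ReflTransGen (BarRemoval t) l l' ∧ IsAbacusEquiv t φ l' m' ∧
      l'.sgn * m'.sgn = l.sgn * m.sgn := by
  induction hm with
  | refl => exact ⟨l, .refl, h, rfl⟩
  | tail _ hstep ih =>
    obtain ⟨l₁, hl₁, h₁, hsgn₁⟩ := ih
    obtain ⟨l₂, hl₂, h₂, hsgn₂⟩ := h₁.exists_barRemoval ht hstep
    exact ⟨l₂, hl₁.tail hl₂, h₂, hsgn₂.trans hsgn₁⟩

end IsAbacusEquiv

/-! ### Runner shifts -/

section RunnerShift

open BarPartition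

variable {t : ℕ} {l m : BarPartition}

/-- The permutation of `ℤ` which, for `1 ≤ r < t / 2`, shifts the residue class of `r` modulo `t`
by `c r` slots and that of `-r` by `-c r` slots. Multiples of `t` are fixed, whatever `c 0` is. -/
def runnerShift (t : ℕ) (c : ℕ → ℤ) : Equiv.Perm ℤ where
  toFun x := x + t * ((x.bmod t).sign * c (x.bmod t).natAbs)
  invFun x := x - t * ((x.bmod t).sign * c (x.bmod t).natAbs)
  left_inv x := by simp
  right_inv x := by simp

theorem runnerShift_apply (t : ℕ) (c : ℕ → ℤ) (x : ℤ) :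
    runnerShift t c x = x + t * ((x.bmod t).sign * c (x.bmod t).natAbs) := rfl

theorem runnerShift_sub (t : ℕ) (c : ℕ → ℤ) (x : ℤ) :
    runnerShift t c (x - t) = runnerShift t c x - t := by
  rw [runnerShift_apply, runnerShift_apply, Int.sub_bmod_right, sub_add_eq_add_sub]

theorem neg_bmod_of_odd (ht : Odd t) (x : ℤ) : (-x).bmod t = -x.bmod t := by
  have hle := Int.le_bmod (x := x) ht.pos
  have hlt := Int.bmod_lt (x := x) ht.pos
  obtain ⟨k, rfl⟩ := ht
  refine (Int.bmod_eq_iff (Nat.succ_pos _)).2 ⟨by lia, by lia, ?_⟩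
  rw [neg_sub_neg]
  exact Int.dvd_self_sub_bmod

theorem runnerShift_neg (ht : Odd t) (c : ℕ → ℤ) (x : ℤ) :
    runnerShift t c (-x) = -runnerShift t c x := by
  rw [runnerShift_apply, runnerShift_apply, neg_bmod_of_odd ht, Int.natAbs_neg, Int.sign_neg]
  ring

theorem runnerShift_mul (t : ℕ) (c : ℕ → ℤ) (i : ℤ) : runnerShift t c (t * i) = t * i := by
  simp [runnerShift_apply]

theorem runnerShift_mul_add (c : ℕ → ℤ) {r : ℕ} (hr : 0 < r) (hrt : 2 * r < t) (i : ℤ) :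
    runnerShift t c (t * i + r) = t * (i + c r) + r := by
  have hbmod : ((t : ℤ) * i + r).bmod t = r := by
    rw [Int.mul_add_bmod_self_left, Int.bmod_eq_iff (by lia)]
    exact ⟨by lia, by lia, by simp⟩
  rw [runnerShift_apply, hbmod, Int.natAbs_natCast, Int.sign_natCast_of_ne_zero hr.ne']
  ring

theorem mem_twistedRunner_iff {r : ℕ} (hr : r < t) (l : BarPartition) (i : ℤ) :
    i ∈ twistedRunner t r l ↔ t * i + r ∈ l.beads := by
  rcases i with n | n
  · have hpos : (t : ℤ) * Int.ofNat n + r = (t * n + r : ℕ) := by simp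
    rw [hpos, natCast_mem_beads]
    simp [twistedRunner]
  · have hneg : (t : ℤ) * Int.negSucc n + r = -(t * n + (t - r) : ℕ) := by
      rw [Int.negSucc_eq]
      push_cast [hr.le]
      ring
    rw [hneg, neg_mem_beads (by lia), natCast_mem_beads]
    simp [twistedRunner, Int.negSucc_lt_zero]

theorem HasSameBarQuotient.mul_mem_beads_iff (h : HasSameBarQuotient t l m) (i : ℤ) :
    t * i ∈ m.beads ↔ t * i ∈ l.beads := by
  rw [mem_beads, mem_beads, Int.natAbs_mul, Int.natAbs_natCast, h.1]

theorem HasSameBarQuotient.exists_isAbacusEquiv (ht : Odd t) (h : HasSameBarQuotient t l m) :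
    ∃ φ, IsAbacusEquiv t φ l m := by
  choose! c hc using h.2
  refine ⟨runnerShift t c, runnerShift_neg ht c, runnerShift_sub t c, fun x => ?_⟩
  have of_pos : ∀ x : ℤ, 0 < x.bmod t → (runnerShift t c x ∈ m.beads ↔ x ∈ l.beads) := by
    intro x hx
    have hlt := Int.bmod_lt (x := x) ht.pos
    obtain ⟨r, hr⟩ := Int.eq_ofNat_of_zero_le hx.le
    have hr0 : 0 < r := by lia
    have hrt : 2 * r < t := by lia
    rw [← Int.bdiv_add_bmod x t, hr, runnerShift_mul_add c hr0 hrt,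
      ← mem_twistedRunner_iff (by lia), ← mem_twistedRunner_iff (by lia), hc r hr0 hrt]
    exact (add_left_injective (c r)).mem_set_image
  rcases lt_trichotomy (x.bmod t) 0 with hx | hx | hx
  · have hx0 : x ≠ 0 := by
      rintro rfl
      simp at hx
    have hφ0 : runnerShift t c x ≠ 0 := by
      have hzero : runnerShift t c 0 = 0 := by simpa using runnerShift_mul t c 0
      exact hzero ▸ (runnerShift t c).injective.ne hx0
    rw [← not_iff_not, ← neg_mem_beads hφ0, ← neg_mem_beads hx0, ← runnerShift_neg ht]
    exact of_pos (-x) (by rw [neg_bmod_of_odd ht]; lia)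
  · obtain ⟨i, rfl⟩ := Int.dvd_of_bmod_eq_zero hx
    rw [runnerShift_mul, h.mul_mem_beads_iff]
  · exact of_pos x hx

end RunnerShift

/-- Let `t ≥ 3` be odd. For every bar-partition `λ` with `t`-bar core `κ`
and `t`-bar cocore `μ`, one has `sgn(λ) = sgn(κ)·sgn(μ)`. -/
theorem sgn_eq_sgn_barCore_mul_sgn_barCocore (t : ℕ) (ht : 3 ≤ t) (htodd : Odd t)
    (l κ μ : BarPartition) (hκ : IsBarCoreOf t l κ) (hμ : IsBarCocoreOf t l μ) :
    l.sgn = κ.sgn * μ.sgn := by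
  obtain ⟨φ, hφ⟩ := hμ.2.exists_isAbacusEquiv htodd
  obtain ⟨κ', hlκ', hφ', hsgn⟩ := hφ.exists_reflTransGen htodd hμ.1
  have hκ' : IsBarCoreOf t l κ' :=
    ⟨hlκ', hφ'.isBarCore htodd BarPartition.isBarCore_empty⟩
  obtain rfl : κ = κ' := hκ.unique htodd hκ'
  calc
    l.sgn = l.sgn * μ.sgn * μ.sgn := by rw [mul_assoc, μ.sgn_mul_self, mul_one]
    _ = κ.sgn * μ.sgn := by rw [← hsgn, BarPartition.sgn_empty, mul_one]
end

section
/- Let p be an odd prime and let λ be a bar-partition with empty p-bar core. Then the set of parts of λ that are not divisible by p can be partitioned into pairs {a, b} with a + b ≡ 0 (mod p). In particular, for every 1 ≤ r ≤ p − 1, the number of parts of λ congruent to r modulo p equals the number of parts of λ congruent to p − r modulo p. -/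
open scoped BigOperators

/-!
A pairing of the parts not divisible by `t` is carried backwards along each bar removal. Moving a
part `a` to `a - t` preserves its residue, so the pairing is conjugated by the transposition of `a`
and `a - t`. Deleting the part `t` does not touch the parts in question, and two deleted parts with
sum `t` form a new pair; they are distinct and smaller than `t`, hence not divisible by it. The
empty partition is paired trivially. Since a pairing sends residue `r` to residue `t - r`, it
matches the two residue classes bijectively.
-/

/-- The elements of `S` not divisible by `t`, the ones to be paired off. -/
def nonmultiples (t : ℕ) (S : Finset ℕ) : Set ℕ := {a | a ∈ S ∧ ¬ t ∣ a}

/-- A partition of `S` into pairs `{a, b}` with `a + b ≡ 0 (mod t)`, encoded as the map sending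
each element of `S` to its partner; the values of `f` outside `S` are irrelevant. -/
structure IsComplementaryPairing (t : ℕ) (S : Set ℕ) (f : ℕ → ℕ) : Prop where
  mapsTo : Set.MapsTo f S S
  apply_ne : ∀ a ∈ S, f a ≠ a
  apply_apply : ∀ a ∈ S, f (f a) = a
  dvd_add_apply : ∀ a ∈ S, t ∣ a + f a

theorem mod_eq_of_dvd_add {t r s a b : ℕ} (hrs : r + s = t) (hr : 0 < r) (ha : a % t = r)
    (hab : t ∣ a + b) : b % t = s := by
  have har : a ≡ r [MOD t] := by simp [← ha, Nat.ModEq]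
  have hsum : a + b ≡ r + s [MOD t] :=
    (Nat.modEq_zero_iff_dvd.2 hab).trans (Nat.modEq_zero_iff_dvd.2 (dvd_of_eq hrs.symm)).symm
  have hbs : b ≡ s [MOD t] := har.add_left_cancel hsum
  exact Nat.mod_eq_of_modEq hbs (by omega)

theorem swap_mem_insert_erase_iff {α : Type*} [DecidableEq α] {S : Finset α} {a b : α}
    (ha : a ∈ S) (hb : b ∉ S) (x : α) :
    Equiv.swap a b x ∈ insert b (S.erase a) ↔ x ∈ S := by
  rw [Equiv.swap_apply_def]
  grind

theorem swap_sub_modEq {t a : ℕ} (hta : t ≤ a) (x : ℕ) :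
    Equiv.swap a (a - t) x ≡ x [MOD t] := by
  have hmod : a - t ≡ a [MOD t] := (Nat.sub_modulus_modEq_iff hta).2 rfl
  rw [Equiv.swap_apply_def]
  split_ifs with hxa hxat
  · rwa [hxa]
  · rw [hxat]
    exact hmod.symm
  · rfl

namespace IsComplementaryPairing

variable {t : ℕ} {S : Set ℕ} {f : ℕ → ℕ}

theorem empty (t : ℕ) (f : ℕ → ℕ) : IsComplementaryPairing t ∅ f where
  mapsTo := Set.mapsTo_empty f ∅
  apply_ne := by simp
  apply_apply := by simp
  dvd_add_apply := by simp

theorem injOn (hf : IsComplementaryPairing t S f) : Set.InjOn f S :=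
  Set.LeftInvOn.injOn (f₁' := f) hf.apply_apply

theorem conj (hf : IsComplementaryPairing t S f) {e : Equiv.Perm ℕ}
    (he : ∀ x, e x ≡ x [MOD t]) : IsComplementaryPairing t (e ⁻¹' S) (e.symm ∘ f ∘ e) where
  mapsTo x hx := by simpa using hf.mapsTo hx
  apply_ne x hx h := hf.apply_ne (e x) hx (by simpa [Equiv.symm_apply_eq] using h)
  apply_apply x hx := by simp [hf.apply_apply (e x) hx]
  dvd_add_apply x hx := by
    have hfx : f (e x) ≡ e.symm (f (e x)) [MOD t] := by simpa using he (e.symm (f (e x)))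
    exact (((he x).add hfx).dvd_iff dvd_rfl).1 (hf.dvd_add_apply (e x) hx)

theorem insert_pair (hf : IsComplementaryPairing t S f) {a b : ℕ} (ha : a ∉ S) (hb : b ∉ S)
    (hab : a ≠ b) (hdvd : t ∣ a + b) :
    IsComplementaryPairing t (insert a (insert b S))
      (Function.update (Function.update f a b) b a) := by
  set g := Function.update (Function.update f a b) b a with hg
  have hga : g a = b := by simp [g, hab]
  have hgb : g b = a := by simp [g]
  have hgS : ∀ x ∈ S, g x = f x := fun x hx => by
    rw [hg, Function.update_of_ne (ne_of_mem_of_not_mem hx hb),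
      Function.update_of_ne (ne_of_mem_of_not_mem hx ha)]
  constructor
  · rintro x (rfl | rfl | hx)
    · simp [hga]
    · simp [hgb]
    · simp [hgS x hx, hf.mapsTo hx]
  · rintro x (rfl | rfl | hx)
    · rwa [hga, ne_comm]
    · rwa [hgb]
    · rw [hgS x hx]
      exact hf.apply_ne x hx
  · rintro x (rfl | rfl | hx)
    · rw [hga, hgb]
    · rw [hgb, hga]
    · rw [hgS x hx, hgS _ (hf.mapsTo hx), hf.apply_apply x hx]
  · rintro x (rfl | rfl | hx)
    · rwa [hga]
    · rwa [hgb, add_comm]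
    · rw [hgS x hx]
      exact hf.dvd_add_apply x hx

end IsComplementaryPairing

theorem preimage_swap_nonmultiples {t a : ℕ} {S : Finset ℕ} (ha : a ∈ S) (hta : t ≤ a)
    (hat : a - t ∉ S) :
    Equiv.swap a (a - t) ⁻¹' nonmultiples t (insert (a - t) (S.erase a)) = nonmultiples t S := by
  ext x
  exact and_congr (swap_mem_insert_erase_iff ha hat x)
    (not_congr ((swap_sub_modEq hta x).dvd_iff dvd_rfl))

theorem nonmultiples_erase_self (t : ℕ) (S : Finset ℕ) :
    nonmultiples t (S.erase t) = nonmultiples t S := by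
  ext x
  have hne : ¬ t ∣ x → x ≠ t := fun hx h => hx (dvd_of_eq h.symm)
  simp only [nonmultiples, Finset.mem_erase, Set.mem_ofPred_eq]
  tauto

theorem insert_insert_nonmultiples_erase {t a b : ℕ} {S : Finset ℕ} (ha : a ∈ S) (hb : b ∈ S)
    (hta : ¬ t ∣ a) (htb : ¬ t ∣ b) :
    insert a (insert b (nonmultiples t ((S.erase a).erase b))) = nonmultiples t S := by
  ext x
  simp only [nonmultiples, Finset.mem_erase, Set.mem_insert_iff, Set.mem_ofPred_eq]
  grind

theorem coe_filter_mod_eq_subset_nonmultiples {t r : ℕ} {S : Finset ℕ} (hr : 0 < r) :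
    (S.filter (fun a => a % t = r) : Set ℕ) ⊆ nonmultiples t S := by
  intro a ha
  obtain ⟨haS, har⟩ := Finset.mem_filter.1 ha
  exact ⟨haS, fun hta => hr.ne (Nat.mod_eq_zero_of_dvd hta ▸ har)⟩

theorem BarPartition.pos_of_mem {l : BarPartition} {a : ℕ} (ha : a ∈ l.parts) : 0 < a :=
  Nat.pos_of_ne_zero (ne_of_mem_of_not_mem ha l.zero_not_mem)

theorem BarRemoval.exists_isComplementaryPairing {t : ℕ} {μ ν : BarPartition}
    (h : BarRemoval t μ ν) (hν : ∃ f, IsComplementaryPairing t (nonmultiples t ν.parts) f) :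
    ∃ f, IsComplementaryPairing t (nonmultiples t μ.parts) f := by
  obtain ⟨f, hf⟩ := hν
  rcases h with ⟨a, ha, hta, hat, hparts⟩ | ⟨-, hparts⟩ | ⟨a, ha, b, hb, hab, hsum, hparts⟩
  · have hconj := hf.conj (swap_sub_modEq hta.le)
    rw [hparts, preimage_swap_nonmultiples ha hta.le hat] at hconj
    exact ⟨_, hconj⟩
  · rw [hparts, nonmultiples_erase_self] at hf
    exact ⟨f, hf⟩
  · have ha_pos : 0 < a := BarPartition.pos_of_mem ha
    have hb_pos : 0 < b := BarPartition.pos_of_mem hb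
    have hta : ¬ t ∣ a := Nat.not_dvd_of_pos_of_lt ha_pos (by omega)
    have htb : ¬ t ∣ b := Nat.not_dvd_of_pos_of_lt hb_pos (by omega)
    have hpair := hf.insert_pair (a := a) (b := b) (by simp [nonmultiples, hparts])
      (by simp [nonmultiples, hparts]) hab (dvd_of_eq hsum.symm)
    rw [hparts, insert_insert_nonmultiples_erase ha hb hta htb] at hpair
    exact ⟨_, hpair⟩

theorem HasEmptyBarCore.exists_isComplementaryPairing {t : ℕ} {l : BarPartition}
    (hl : HasEmptyBarCore t l) : ∃ f, IsComplementaryPairing t (nonmultiples t l.parts) f := by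
  induction hl using Relation.ReflTransGen.head_induction_on with
  | refl => exact ⟨id, by simpa [nonmultiples, BarPartition.empty] using .empty t id⟩
  | head hstep _ ih => exact hstep.exists_isComplementaryPairing ih

namespace IsComplementaryPairing

variable {t r s : ℕ} {S : Finset ℕ} {f : ℕ → ℕ}

theorem mapsTo_filter_mod_eq (hf : IsComplementaryPairing t (nonmultiples t S) f)
    (hrs : r + s = t) (hr : 0 < r) :
    Set.MapsTo f (S.filter (fun a => a % t = r)) (S.filter (fun a => a % t = s)) := by
  intro a ha
  have hmem : a ∈ nonmultiples t S := coe_filter_mod_eq_subset_nonmultiples hr ha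
  exact Finset.mem_filter.2 ⟨(hf.mapsTo hmem).1,
    mod_eq_of_dvd_add hrs hr (Finset.mem_filter.1 ha).2 (hf.dvd_add_apply a hmem)⟩

theorem card_filter_mod_le (hf : IsComplementaryPairing t (nonmultiples t S) f)
    (hrs : r + s = t) (hr : 0 < r) :
    (S.filter (fun a => a % t = r)).card ≤ (S.filter (fun a => a % t = s)).card :=
  Finset.card_le_card_of_injOn f (hf.mapsTo_filter_mod_eq hrs hr)
    (hf.injOn.mono (coe_filter_mod_eq_subset_nonmultiples hr))

theorem card_filter_mod_eq (hf : IsComplementaryPairing t (nonmultiples t S) f)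
    (hrs : r + s = t) (hr : 0 < r) (hs : 0 < s) :
    (S.filter (fun a => a % t = r)).card = (S.filter (fun a => a % t = s)).card :=
  (hf.card_filter_mod_le hrs hr).antisymm (hf.card_filter_mod_le ((add_comm s r).trans hrs) hs)

end IsComplementaryPairing

theorem barCocore_parts_pairing_general (t : ℕ) (l : BarPartition) (hl : HasEmptyBarCore t l) :
    (∃ f : ℕ → ℕ, ∀ a ∈ l.parts, ¬ t ∣ a →
      f a ∈ l.parts ∧ ¬ t ∣ f a ∧ f a ≠ a ∧ f (f a) = a ∧ t ∣ (a + f a)) ∧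
    ∀ r : ℕ, 1 ≤ r → r ≤ t - 1 →
      (l.parts.filter (fun a => a % t = r)).card =
        (l.parts.filter (fun a => a % t = t - r)).card := by
  obtain ⟨f, hf⟩ := hl.exists_isComplementaryPairing
  refine ⟨⟨f, fun a ha hta => ?_⟩, fun r hr hrt => ?_⟩
  · obtain ⟨hfa, htfa⟩ := hf.mapsTo ⟨ha, hta⟩
    exact ⟨hfa, htfa, hf.apply_ne a ⟨ha, hta⟩, hf.apply_apply a ⟨ha, hta⟩,
      hf.dvd_add_apply a ⟨ha, hta⟩⟩
  · exact hf.card_filter_mod_eq (by omega) (by omega) (by omega)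

/-- Let `p` be an odd prime and `λ` a bar-partition with empty `p`-bar core.
Then the parts of `λ` not divisible by `p` can be partitioned into pairs `{a, b}` with
`a + b ≡ 0 (mod p)` (witnessed by a fixed-point-free pairing involution); in particular, for
every `1 ≤ r ≤ p − 1` the number of parts congruent to `r` mod `p` equals the number of parts
congruent to `p − r` mod `p`. -/
theorem barCocore_parts_pairing (p : ℕ) (hp : p.Prime) (hpodd : Odd p)
    (l : BarPartition) (hl : HasEmptyBarCore p l) :
    (∃ f : ℕ → ℕ, ∀ a ∈ l.parts, ¬ p ∣ a →
      f a ∈ l.parts ∧ ¬ p ∣ f a ∧ f a ≠ a ∧ f (f a) = a ∧ p ∣ (a + f a)) ∧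
    ∀ r : ℕ, 1 ≤ r → r ≤ p - 1 →
      (l.parts.filter (fun a => a % p = r)).card =
        (l.parts.filter (fun a => a % p = p - r)).card :=
  barCocore_parts_pairing_general p l hl
end

section
/- Let p be an odd prime, let λ be a bar-partition with p-bar core κ = λ_(p̄) and p-bar cocore μ = λ^[p̄], and let σ be a σ_p-type automorphism of ℚ̄. Let P(ν) denote the product of the parts of a bar-partition ν, and set d = (ℓ(κ) + ℓ(μ) − ℓ(λ))/2, which is a nonnegative integer. Then τ(P(λ),σ)·τ(P(κ),σ)·τ(P(μ),σ) = (−1)^(d·(p−1)/2). -/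
open scoped BigOperators

/-- The product `P(ν)` of the parts of a bar-partition. -/
def BarPartition.partsProd (l : BarPartition) : ℕ := ∏ a ∈ l.parts, a

/-!
A removal of a `p`-bar acts on the multiset of nonzero residues mod `p` of the parts trivially or by
deleting a pair `{x, -x}`. So the residues of `λ` are those of its core `κ` plus a symmetric
multiset `N + (-N)`, and those of the cocore `μ` are symmetric, `M + (-M)`. Since `λ` and `μ` have
the same parts divisible by `p`, while `κ` has none, `ℓ(κ) + ℓ(μ) - ℓ(λ) = 2(|M| - |N|)`. To see
that `|N| ≤ |M|`, note that `μ` arises from `λ` by shifting each twisted runner, so that either the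
parts congruent to `r` or those congruent to `-r` do not decrease in number; by symmetry the
multiplicity of any `x` in `N + (-N)` is at most that in `M + (-M)`.

On the arithmetic side, an automorphism that is a `p`-th power on the roots of unity of order prime
to `p` induces the Frobenius on the residues, modulo a prime above `p`, of the ring they generate.
That ring contains `√a` for `p ∤ a` by Gauss sums, hence `τ(a, σ)` is the Legendre symbol `(a/p)` by
Euler's criterion. In the product of the three signs the parts divisible by `p` and the residues of
`κ` occur twice, and every remaining pair `{x, -x}` contributes `(-1/p) = (-1)^((p-1)/2)`.
-/

section SquareRootsInCyclotomicRings

variable {R : Type*} [CommRing R]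

theorem gaussSum_mem_of_forall_mem {A : Type*} [CommRing A] [Fintype A] {χ : MulChar A R}
    {ψ : AddChar A R} {S : Subring R} (hχ : ∀ x, χ x ∈ S) (hψ : ∀ x, ψ x ∈ S) :
    gaussSum χ ψ ∈ S :=
  sum_mem fun x _ => mul_mem (hχ x) (hψ x)

theorem pow_mem_closure_singleton (ζ : R) (k : ℕ) : ζ ^ k ∈ Subring.closure {ζ} :=
  pow_mem (Subring.mem_closure_of_mem (Set.mem_singleton ζ)) k

variable [IsDomain R]

theorem exists_sq_eq_two_of_isPrimitiveRoot {ζ : R} (hζ : IsPrimitiveRoot ζ 8) :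
    ∃ α ∈ Subring.closure {ζ}, α ^ 2 = 2 := by
  have hζ4 : ζ ^ 4 = -1 :=
    (hζ.pow (by norm_num) (show 8 = 4 * 2 by norm_num)).eq_neg_one_of_two_right
  refine ⟨ζ - ζ ^ 3, sub_mem ?_ (pow_mem_closure_singleton ζ 3), ?_⟩
  · exact Subring.mem_closure_of_mem (Set.mem_singleton ζ)
  · linear_combination (ζ ^ 2 - 2) * hζ4

theorem exists_sq_eq_or_eq_neg_of_isPrimitiveRoot {q : ℕ} [Fact q.Prime] (hq : q ≠ 2)
    (hR : (2 : R) ≠ 0) {ζ : R} (hζ : IsPrimitiveRoot ζ q) :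
    ∃ g ∈ Subring.closure {ζ}, g ^ 2 = q ∨ g ^ 2 = -q := by
  have hchar : ringChar (ZMod q) ≠ 2 := by rwa [ZMod.ringChar_zmod_n]
  let χ : MulChar (ZMod q) R := (quadraticChar (ZMod q)).ringHomComp (Int.castRingHom R)
  let ψ : AddChar (ZMod q) R := AddChar.zmodChar q hζ.pow_eq_one
  have hχ : χ.IsQuadratic := (quadraticChar_isQuadratic (ZMod q)).comp _
  have hχ1 : χ ≠ 1 := by
    obtain ⟨u, hu⟩ := quadraticChar_exists_neg_one' hchar
    refine MulChar.ne_one_iff.mpr ⟨u, fun h => hR ?_⟩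
    have : (-1 : R) = 1 := by simpa [χ, MulChar.ringHomComp_apply, hu] using h
    linear_combination -this
  have hmem : gaussSum χ ψ ∈ Subring.closure {ζ} := by
    refine gaussSum_mem_of_forall_mem (fun x => ?_) fun x => ?_
    · exact intCast_mem _ (quadraticChar (ZMod q) x)
    · rw [AddChar.zmodChar_apply]
      exact pow_mem_closure_singleton ζ _
  have hsq : gaussSum χ ψ ^ 2 = χ (-1) * q := by
    rw [gaussSum_sq hχ1 hχ (AddChar.zmodChar_primitive_of_primitive_root q hζ), ZMod.card]
  refine ⟨_, hmem, ?_⟩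
  rcases hχ (-1) with h | h | h
  · exact absurd h (isUnit_one.neg.map χ).ne_zero
  · exact .inl (by rw [hsq, h, one_mul])
  · exact .inr (by rw [hsq, h, neg_one_mul])

theorem exists_sq_eq_prime_of_isPrimitiveRoot {q : ℕ} (hq : q.Prime) {ζ : R}
    (hζ : IsPrimitiveRoot ζ (4 * q)) : ∃ α ∈ Subring.closure {ζ}, α ^ 2 = q := by
  rcases eq_or_ne q 2 with rfl | hq2
  · exact_mod_cast exists_sq_eq_two_of_isPrimitiveRoot hζ
  have : Fact q.Prime := ⟨hq⟩
  have hpos : 0 < 4 * q := mul_pos four_pos hq.pos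
  have hR : (2 : R) ≠ 0 := by
    have := NeZero.of_pos hpos
    have h4q : ((4 * q : ℕ) : R) ≠ 0 := (hζ.neZero' (n := 4 * q)).out
    intro h
    exact h4q (by push_cast; linear_combination 2 * (q : R) * h)
  have hi : (ζ ^ q) ^ 2 = -1 :=
    ((hζ.pow hpos (mul_comm 4 q)).pow four_pos rfl).eq_neg_one_of_two_right
  obtain ⟨g, hg, hsq⟩ := exists_sq_eq_or_eq_neg_of_isPrimitiveRoot hq2 hR (hζ.pow hpos rfl)
  have hg' : g ∈ Subring.closure {ζ} :=
    Subring.closure_le.mpr (Set.singleton_subset_iff.mpr (pow_mem_closure_singleton ζ 4)) hg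
  rcases hsq with hsq | hsq
  · exact ⟨g, hg', hsq⟩
  · exact ⟨ζ ^ q * g, mul_mem (pow_mem_closure_singleton ζ q) hg', by rw [mul_pow, hi, hsq]; ring⟩

theorem exists_sq_eq_natCast_of_isPrimitiveRoot {n : ℕ} {ζ : R}
    (hζ : IsPrimitiveRoot ζ (4 * n)) : ∃ α ∈ Subring.closure {ζ}, α ^ 2 = n := by
  induction n using induction_on_primes generalizing ζ with
  | zero => exact ⟨0, zero_mem _, by simp⟩
  | one => exact ⟨1, one_mem _, by simp⟩
  | prime_mul q a hq ih =>
    rcases a.eq_zero_or_pos with rfl | ha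
    · exact ⟨0, zero_mem _, by simp⟩
    have hpos : 0 < 4 * (q * a) := mul_pos four_pos (mul_pos hq.pos ha)
    have hle (k : ℕ) : Subring.closure {ζ ^ k} ≤ Subring.closure {ζ} :=
      Subring.closure_le.mpr (Set.singleton_subset_iff.mpr (pow_mem_closure_singleton ζ k))
    obtain ⟨β, hβ, hβq⟩ := exists_sq_eq_prime_of_isPrimitiveRoot hq
      (hζ.pow hpos (show 4 * (q * a) = a * (4 * q) by ring))
    obtain ⟨γ, hγ, hγa⟩ := ih (hζ.pow hpos (show 4 * (q * a) = q * (4 * a) by ring))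
    exact ⟨β * γ, mul_mem (hle a hβ) (hle q hγ), by rw [mul_pow, hβq, hγa, Nat.cast_mul]⟩

end SquareRootsInCyclotomicRings

section FrobeniusOnSquareRoots

variable {p : ℕ} [Fact p.Prime]

theorem pow_prime_eq_quadraticChar_mul {F : Type*} [CommRing F] [CharP F p] (hp : p ≠ 2) {n : ℕ}
    {x : F} (hx : x ^ 2 = n) : x ^ p = (quadraticChar (ZMod p) n : F) * x := by
  have euler : ((quadraticChar (ZMod p) n : ℤ) : ZMod p) = (n : ZMod p) ^ (p / 2) := by
    rw [quadraticChar_eq_pow_of_char_ne_two' (by rwa [ZMod.ringChar_zmod_n]), ZMod.card]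
  have euler' : ((quadraticChar (ZMod p) n : ℤ) : F) = (n : F) ^ (p / 2) := by
    simpa using congrArg (ZMod.castHom dvd_rfl F) euler
  calc x ^ p = x ^ (2 * (p / 2) + 1) := by
        rw [Nat.two_mul_div_two_add_one_of_odd ((Fact.out : p.Prime).odd_of_ne_two hp)]
    _ = (quadraticChar (ZMod p) n : F) * x := by rw [pow_succ, pow_mul, hx, euler']

theorem map_eq_quadraticChar_mul_of_isPrimitiveRoot {R F : Type*} [CommRing R] [IsDomain R]
    [CommRing F] [IsDomain F] [CharP F p] (hp : p ≠ 2) (φ : R →+* F) (σ : R →+* R) {n : ℕ}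
    (hn : ¬ p ∣ n) {ζ : R} (hζ : IsPrimitiveRoot ζ (4 * n)) (hσ : σ ζ = ζ ^ p) {α : R}
    (hα : α ^ 2 = n) : σ α = (quadraticChar (ZMod p) n : R) * α := by
  have hmem : α ∈ Subring.closure {ζ} := by
    obtain ⟨β, hβ, hβn⟩ := exists_sq_eq_natCast_of_isPrimitiveRoot hζ
    rcases sq_eq_sq_iff_eq_or_eq_neg.mp (hα.trans hβn.symm) with rfl | rfl
    exacts [hβ, neg_mem hβ]
  have hfrob : φ (σ α) = φ α ^ p :=
    RingHom.eqOn_set_closure (f := φ.comp σ) (g := (frobenius F p).comp φ)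
      (Set.eqOn_singleton.mpr (by simp [hσ, frobenius_def])) hmem
  have hφα : φ α ^ 2 = n := by rw [← map_pow, hα, map_natCast]
  have hne : φ α ≠ -φ α := by
    have hn0 : (n : F) ≠ 0 := by rwa [Ne, CharP.cast_eq_zero_iff F p]
    have h0 : φ α ≠ 0 := fun h => hn0 (by simpa [h] using hφα.symm)
    have h2 : ringChar F ≠ 2 := by rwa [ringChar.eq F p]
    exact fun h => h0 ((Ring.eq_self_iff_eq_zero_of_char_ne_two h2).mp h.symm)
  rw [pow_prime_eq_quadraticChar_mul hp hφα] at hfrob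
  have hσα : σ α = α ∨ σ α = -α :=
    sq_eq_sq_iff_eq_or_eq_neg.mp (by rw [← map_pow, hα, map_natCast])
  have hχ := quadraticChar_dichotomy (show (n : ZMod p) ≠ 0 by rwa [Ne, ZMod.natCast_eq_zero_iff])
  rcases hσα with h | h <;> rcases hχ with hχ | hχ <;> rw [h, hχ] at hfrob <;>
    simp only [map_neg, Int.cast_one, Int.cast_neg, one_mul, neg_mul] at hfrob
  · simp [h, hχ]
  · exact absurd hfrob hne
  · exact absurd hfrob.symm hne
  · simp [h, hχ]

variable (p) in
theorem exists_isMaximal_charP_quotient (R : Type*) [CommRing R] [CharZero R]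
    [Algebra.IsIntegral ℤ R] : ∃ Q : Ideal R, Q.IsMaximal ∧ CharP (R ⧸ Q) p := by
  have hp : Prime (p : ℤ) := Nat.prime_iff_prime_int.mp Fact.out
  have : (Ideal.span {(p : ℤ)}).IsMaximal :=
    PrincipalIdealRing.isMaximal_of_irreducible hp.irreducible
  obtain ⟨Q, hQ, hover⟩ :=
    Ideal.exists_maximal_ideal_liesOver_of_isIntegral (S := R) (Ideal.span {(p : ℤ)})
  refine ⟨Q, hQ, (CharP.charP_iff_prime_eq_zero Fact.out).mpr ?_⟩
  have hpQ : algebraMap ℤ R p ∈ Q :=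
    (Ideal.mem_of_liesOver Q (Ideal.span {(p : ℤ)}) p).mp (Ideal.mem_span_singleton_self _)
  simpa using Ideal.Quotient.eq_zero_iff_mem.mpr hpQ

theorem map_eq_quadraticChar_mul_of_sq_eq {K : Type*} [Field K] [IsAlgClosed K] [CharZero K]
    (hp : p ≠ 2) (σ : K →+* K)
    (hσ : ∀ (ζ : K) (n : ℕ), 0 < n → n.Coprime p → ζ ^ n = 1 → σ ζ = ζ ^ p) {n : ℕ}
    (hn : ¬ p ∣ n) {α : K} (hα : α ^ 2 = n) : σ α = (quadraticChar (ZMod p) n : K) * α := by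
  have hprime : p.Prime := Fact.out
  have hpos : 0 < 4 * n := mul_pos four_pos (Nat.pos_of_ne_zero fun h => hn (h ▸ dvd_zero p))
  have := NeZero.of_pos hpos
  have hcop : (4 * n).Coprime p :=
    .mul_left (.pow_left 2 (Nat.coprime_two_left.mpr (hprime.odd_of_ne_two hp)))
      ((hprime.coprime_iff_not_dvd.mpr hn).symm)
  obtain ⟨ζ, hζ⟩ := HasEnoughRootsOfUnity.exists_primitiveRoot K (4 * n)
  let ζ' : integralClosure ℤ K := ⟨ζ, hζ.isIntegral hpos⟩
  let α' : integralClosure ℤ K := ⟨α, .of_pow two_pos (hα ▸ isIntegral_natCast n)⟩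
  have hζ' : IsPrimitiveRoot ζ' (4 * n) := IsPrimitiveRoot.coe_submonoidClass_iff.mp hζ
  obtain ⟨Q, hQ, hchar⟩ := exists_isMaximal_charP_quotient p (integralClosure ℤ K)
  have h := map_eq_quadraticChar_mul_of_isPrimitiveRoot hp (Ideal.Quotient.mk Q)
    σ.toIntAlgHom.mapIntegralClosure.toRingHom hn hζ'
    (Subtype.ext (hσ ζ _ hpos hcop hζ.pow_eq_one)) (α := α') (Subtype.ext (by simpa using hα))
  simpa using congrArg Subtype.val h

end FrobeniusOnSquareRoots

section SqrtSign

variable {K : Type*} [Field K]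

open Classical in
/-- The sign `τ(D, σ)` by which the field endomorphism `σ` acts on the square roots of an element
`D` that it fixes. If `D` has no square root in `K`, the value is the junk value `-1`. -/
noncomputable def sqrtSign (σ : K →+* K) (D : K) : ℤ :=
  if ∃ α, α ^ 2 = D ∧ σ α = α then 1 else -1

theorem sqrtSign_sq (σ : K →+* K) (D : K) : sqrtSign σ D ^ 2 = 1 := by
  unfold sqrtSign
  split_ifs <;> norm_num

theorem map_eq_sqrtSign_mul {σ : K →+* K} {D α : K} (hD : σ D = D) (hα : α ^ 2 = D) :
    σ α = sqrtSign σ D * α := by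
  unfold sqrtSign
  split_ifs with h
  · obtain ⟨β, hβ, hσβ⟩ := h
    rcases sq_eq_sq_iff_eq_or_eq_neg.mp (hα.trans hβ.symm) with rfl | rfl <;> simp [hσβ]
  · have hsq : σ α ^ 2 = α ^ 2 := by rw [← map_pow, hα, hD]
    rcases sq_eq_sq_iff_eq_or_eq_neg.mp hsq with hσ | hσ
    · exact absurd ⟨α, hα, hσ⟩ h
    · simp [hσ]

variable [IsAlgClosed K] [CharZero K] {σ : K →+* K}

theorem eq_sqrtSign {D : K} (hσD : σ D = D) (hD : D ≠ 0) {s : ℤ}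
    (hs : ∀ α, α ^ 2 = D → σ α = s * α) : s = sqrtSign σ D := by
  obtain ⟨α, hα⟩ := IsAlgClosed.exists_pow_nat_eq D two_pos
  have hα0 : α ≠ 0 := by
    rintro rfl
    exact hD (by simpa using hα.symm)
  exact_mod_cast mul_right_cancel₀ hα0 ((hs α hα).symm.trans (map_eq_sqrtSign_mul hσD hα))

theorem sqrtSign_prod {ι : Type*} {S : Finset ι} {f : ι → K} (hσ : ∀ i ∈ S, σ (f i) = f i)
    (hf : ∀ i ∈ S, f i ≠ 0) : sqrtSign σ (∏ i ∈ S, f i) = ∏ i ∈ S, sqrtSign σ (f i) := by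
  choose r hr using fun x : K => IsAlgClosed.exists_pow_nat_eq x two_pos
  have hprod : σ (∏ i ∈ S, f i) = ∏ i ∈ S, f i := by rw [map_prod, Finset.prod_congr rfl hσ]
  have hsq : (∏ i ∈ S, r (f i)) ^ 2 = ∏ i ∈ S, f i := by simp only [← Finset.prod_pow, hr]
  have hr0 : ∏ i ∈ S, r (f i) ≠ 0 := by
    intro h
    exact Finset.prod_ne_zero_iff.mpr hf (by rw [← hsq, h, zero_pow two_ne_zero])
  have hmap : σ (∏ i ∈ S, r (f i)) = (∏ i ∈ S, sqrtSign σ (f i) : ℤ) * ∏ i ∈ S, r (f i) := by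
    rw [map_prod, Finset.prod_congr rfl fun i hi => map_eq_sqrtSign_mul (hσ i hi) (hr (f i)),
      Finset.prod_mul_distrib, Int.cast_prod]
  exact_mod_cast mul_right_cancel₀ hr0 ((map_eq_sqrtSign_mul hprod hsq).symm.trans hmap)

theorem sqrtSign_natCast_eq_quadraticChar {p : ℕ} [Fact p.Prime] (hp : p ≠ 2)
    (hσ : ∀ (ζ : K) (n : ℕ), 0 < n → n.Coprime p → ζ ^ n = 1 → σ ζ = ζ ^ p) {n : ℕ}
    (hn : ¬ p ∣ n) : sqrtSign σ (n : K) = quadraticChar (ZMod p) n := by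
  have hn0 : (n : K) ≠ 0 := Nat.cast_ne_zero.mpr fun h => hn (h ▸ dvd_zero p)
  exact (eq_sqrtSign (map_natCast σ n) hn0 fun α hα =>
    map_eq_quadraticChar_mul_of_sq_eq hp σ hσ hn hα).symm

end SqrtSign

section Residues

variable {t : ℕ} {S : Finset ℕ} {l m n κ : BarPartition}

/-- The multiset of nonzero residues mod `t` of the elements of `S`. When `S` is the set of parts of
a bar-partition, these are the runners `≠ 0` carrying the beads of its `t`-bar-abacus. -/
def nonzeroResidues (t : ℕ) (S : Finset ℕ) : Multiset (ZMod t) :=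
  (S.val.map (Nat.cast : ℕ → ZMod t)).filter (· ≠ 0)

@[simp]
theorem nonzeroResidues_empty : nonzeroResidues t ∅ = 0 := rfl

theorem ne_zero_of_mem_nonzeroResidues {x : ZMod t} (hx : x ∈ nonzeroResidues t S) : x ≠ 0 :=
  (Multiset.mem_filter.mp hx).2

theorem nonzeroResidues_insert {a : ℕ} (ha : a ∉ S) :
    nonzeroResidues t (insert a S) =
      ({(a : ZMod t)} : Multiset (ZMod t)).filter (· ≠ 0) + nonzeroResidues t S := by
  rw [nonzeroResidues, Finset.insert_val_of_notMem ha, Multiset.map_cons, ← Multiset.singleton_add,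
    Multiset.filter_add, nonzeroResidues]

theorem nonzeroResidues_eq_map_filter :
    nonzeroResidues t S = (S.filter (¬ t ∣ ·)).val.map (Nat.cast : ℕ → ZMod t) := by
  simp only [nonzeroResidues, Multiset.filter_map, Finset.filter_val, Function.comp_def, ne_eq,
    ZMod.natCast_eq_zero_iff]

theorem count_nonzeroResidues {x : ZMod t} (hx : x ≠ 0) :
    (nonzeroResidues t S).count x = (S.filter fun a : ℕ => (a : ZMod t) = x).card := by
  rw [nonzeroResidues, Multiset.count_filter_of_pos (p := (· ≠ 0)) hx, Multiset.count_map,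
    Finset.card_def, Finset.filter_val]
  simp only [eq_comm]

theorem BarPartition.length_eq_card_filter_dvd_add_card_nonzeroResidues (l : BarPartition) (t : ℕ) :
    l.length = (l.parts.filter (t ∣ ·)).card + (nonzeroResidues t l.parts).card := by
  rw [nonzeroResidues_eq_map_filter, Multiset.card_map, Finset.card_val,
    Finset.card_filter_add_card_filter_not, BarPartition.length]

theorem BarRemoval.exists_nonzeroResidues_eq_add (h : BarRemoval t m n) :
    ∃ N : Multiset (ZMod t),
      nonzeroResidues t m.parts = nonzeroResidues t n.parts + (N + N.map Neg.neg) := by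
  rcases h with ⟨a, ha, hta, hnew, hn⟩ | ⟨ht, hn⟩ | ⟨a, ha, b, hb, hab, hsum, hn⟩
  · refine ⟨0, ?_⟩
    have hcast : ((a - t : ℕ) : ZMod t) = a := by simp [Nat.cast_sub hta.le]
    rw [hn, nonzeroResidues_insert (fun h => hnew (Finset.mem_of_mem_erase h)), hcast,
      ← nonzeroResidues_insert (Finset.notMem_erase a _), Finset.insert_erase ha]
    simp
  · refine ⟨0, ?_⟩
    rw [hn, ← Finset.insert_erase ht, nonzeroResidues_insert (Finset.notMem_erase t _)]
    simp [Multiset.filter_singleton]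
  · refine ⟨({(a : ZMod t)} : Multiset (ZMod t)).filter (· ≠ 0), ?_⟩
    have hb' : b ∈ m.parts.erase a := Finset.mem_erase.mpr ⟨hab.symm, hb⟩
    have hcast : (b : ZMod t) = -a := by
      rw [eq_neg_iff_add_eq_zero, ← Nat.cast_add, add_comm, hsum, ZMod.natCast_self]
    have hpair : ({(a : ZMod t)} : Multiset (ZMod t)).filter (· ≠ 0) +
        ({(b : ZMod t)} : Multiset (ZMod t)).filter (· ≠ 0) + nonzeroResidues t n.parts =
          nonzeroResidues t m.parts := by
      rw [hn, add_assoc, ← nonzeroResidues_insert (Finset.notMem_erase b _),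
        Finset.insert_erase hb', ← nonzeroResidues_insert (Finset.notMem_erase a _),
        Finset.insert_erase ha]
    rw [← hpair, add_comm, hcast]
    congr 2
    simp only [Multiset.filter_singleton, ne_eq, neg_eq_zero]
    split_ifs <;> rfl

theorem exists_nonzeroResidues_eq_add_of_reflTransGen
    (h : Relation.ReflTransGen (BarRemoval t) m n) :
    ∃ N : Multiset (ZMod t),
      nonzeroResidues t m.parts = nonzeroResidues t n.parts + (N + N.map Neg.neg) := by
  induction h with
  | refl => exact ⟨0, by simp⟩
  | tail _ hstep ih =>
    obtain ⟨N, hN⟩ := ih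
    obtain ⟨N', hN'⟩ := hstep.exists_nonzeroResidues_eq_add
    refine ⟨N + N', ?_⟩
    rw [hN, hN', Multiset.map_add]
    abel

theorem HasEmptyBarCore.exists_nonzeroResidues_eq (h : HasEmptyBarCore t m) :
    ∃ N : Multiset (ZMod t), nonzeroResidues t m.parts = N + N.map Neg.neg := by
  simpa [BarPartition.empty] using exists_nonzeroResidues_eq_add_of_reflTransGen h

theorem IsBarCore.not_dvd (hκ : IsBarCore t κ) {a : ℕ} (ha : a ∈ κ.parts) : ¬ t ∣ a := by
  induction a using Nat.strong_induction_on with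
  | _ a ih =>
    intro hdvd
    have ha0 : 0 < a := Nat.pos_of_ne_zero fun h => κ.zero_not_mem (h ▸ ha)
    rcases (Nat.le_of_dvd ha0 hdvd).eq_or_lt with rfl | hta
    · exact hκ ⟨κ.parts.erase t, fun h => κ.zero_not_mem (Finset.mem_of_mem_erase h)⟩
        (.inr (.inl ⟨ha, rfl⟩))
    have hmem : a - t ∈ κ.parts := by
      by_contra hnew
      refine hκ ⟨insert (a - t) (κ.parts.erase a), fun h => ?_⟩ (.inl ⟨a, ha, hta, hnew, rfl⟩)
      rcases Finset.mem_insert.mp h with h | h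
      · omega
      · exact κ.zero_not_mem (Finset.mem_of_mem_erase h)
    have ht0 : 0 < t := Nat.pos_of_dvd_of_pos hdvd ha0
    exact ih (a - t) (by omega) hmem (Nat.dvd_sub hdvd dvd_rfl)

theorem length_add_length_eq_of_nonzeroResidues {N M : Multiset (ZMod t)}
    (hl : nonzeroResidues t l.parts = nonzeroResidues t κ.parts + (N + N.map Neg.neg))
    (hm : nonzeroResidues t m.parts = M + M.map Neg.neg)
    (hκ : κ.parts.filter (t ∣ ·) = ∅) (hlm : m.parts.filter (t ∣ ·) = l.parts.filter (t ∣ ·)) :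
    κ.length + m.length + 2 * N.card = l.length + 2 * M.card := by
  simp only [BarPartition.length_eq_card_filter_dvd_add_card_nonzeroResidues _ t, hl, hm, hκ, hlm,
    Multiset.card_add, Multiset.card_map, Finset.card_empty]
  ring

theorem HasSameBarQuotient.filter_dvd_eq (h : HasSameBarQuotient t l m) :
    m.parts.filter (t ∣ ·) = l.parts.filter (t ∣ ·) := by
  ext a
  simp only [Finset.mem_filter, and_congr_left_iff]
  rintro ⟨k, rfl⟩
  exact (h.1 k).symm

end Residues

section TwistedRunner

variable {t r : ℕ} {S T : Finset ℕ} {l m : BarPartition}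

theorem natCast_mem_twistedRunner {k : ℕ} :
    (k : ℤ) ∈ twistedRunner t r l ↔ t * k + r ∈ l.parts := by
  simp [twistedRunner]

theorem negSucc_mem_twistedRunner {k : ℕ} :
    Int.negSucc k ∈ twistedRunner t r l ↔ t * k + (t - r) ∉ l.parts := by
  simp [twistedRunner, Int.negSucc_lt_zero, Int.negSucc_not_nonneg]

theorem count_nonzeroResidues_le_of_shift (hr0 : 0 < r) (hrt : r < t) (c : ℕ)
    (h : ∀ k, t * k + r ∈ S → t * (k + c) + r ∈ T) :
    (nonzeroResidues t S).count (r : ZMod t) ≤ (nonzeroResidues t T).count (r : ZMod t) := by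
  have hr : (r : ZMod t) ≠ 0 := by
    rw [Ne, ZMod.natCast_eq_zero_iff]
    exact Nat.not_dvd_of_pos_of_lt hr0 hrt
  rw [count_nonzeroResidues hr, count_nonzeroResidues hr]
  refine Finset.card_le_card_of_injOn (· + t * c) (fun a ha => ?_) (add_left_injective _).injOn
  obtain ⟨haS, har⟩ := Finset.mem_filter.mp ha
  have hmod : a % t = r := by
    rwa [ZMod.natCast_eq_natCast_iff', Nat.mod_eq_of_lt hrt] at har
  have hdiv : t * (a / t) + r = a := hmod ▸ Nat.div_add_mod a t
  have hshift : t * (a / t + c) + r = a + t * c := by rw [mul_add, add_right_comm, hdiv]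
  refine Finset.mem_filter.mpr ⟨?_, by simpa using har⟩
  simpa only [hshift] using h (a / t) (hdiv.symm ▸ haS)

/-- Moving a twisted runner away from the fence by `c ≥ 0` keeps all beads of runner `r`; moving it
by `c ≤ 0` keeps all beads of runner `t - r`. -/
theorem count_nonzeroResidues_le_or_le_of_twistedRunner_eq_image (hr0 : 0 < r) (hrt : r < t) {c : ℤ}
    (h : twistedRunner t r m = (· + c) '' twistedRunner t r l) :
    (nonzeroResidues t l.parts).count (r : ZMod t) ≤
        (nonzeroResidues t m.parts).count (r : ZMod t) ∨
      (nonzeroResidues t l.parts).count (-r : ZMod t) ≤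
        (nonzeroResidues t m.parts).count (-r : ZMod t) := by
  have hmem (i : ℤ) : i + c ∈ twistedRunner t r m ↔ i ∈ twistedRunner t r l := by
    rw [h, (add_left_injective c).mem_set_image]
  rcases c.eq_nat_or_neg with ⟨c, rfl | rfl⟩
  · refine .inl (count_nonzeroResidues_le_of_shift hr0 hrt c fun k hk => ?_)
    rwa [← natCast_mem_twistedRunner, Nat.cast_add, hmem, natCast_mem_twistedRunner]
  · right
    have hneg : (-r : ZMod t) = (t - r : ℕ) := by simp [Nat.cast_sub hrt.le]
    rw [hneg]
    refine count_nonzeroResidues_le_of_shift (by omega) (by omega) c fun k hk => ?_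
    have hshift : Int.negSucc (k + c) = Int.negSucc k + -c := by omega
    by_contra hk'
    rw [← negSucc_mem_twistedRunner, hshift, hmem, negSucc_mem_twistedRunner] at hk'
    exact hk' hk

theorem count_neg_of_map_neg_eq {A : Type*} [InvolutiveNeg A] [DecidableEq A] {N : Multiset A}
    (hN : N.map Neg.neg = N) (x : A) : N.count (-x) = N.count x := by
  conv_lhs => rw [← hN]
  exact Multiset.count_map_eq_count' Neg.neg N neg_injective x

theorem map_neg_add_map_neg {A : Type*} [InvolutiveNeg A] (N : Multiset A) :
    (N + N.map Neg.neg).map Neg.neg = N + N.map Neg.neg := by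
  rw [Multiset.map_add, Multiset.map_map, neg_comp_neg, Multiset.map_id, add_comm]

theorem card_le_card_of_add_map_neg_le {A : Type*} [Neg A] {N M : Multiset A}
    (h : N + N.map Neg.neg ≤ M + M.map Neg.neg) : N.card ≤ M.card := by
  have := Multiset.card_le_card h
  simp only [Multiset.card_add, Multiset.card_map] at this
  omega

theorem exists_eq_natCast_or_eq_neg_natCast (ht : Odd t) {x : ZMod t} (hx : x ≠ 0) :
    ∃ r : ℕ, 0 < r ∧ 2 * r < t ∧ (x = r ∨ x = -r) := by
  have := NeZero.of_pos ht.pos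
  have hle := x.natAbs_valMinAbs_le
  have hodd := Nat.two_mul_div_two_add_one_of_odd ht
  refine ⟨x.valMinAbs.natAbs, ?_, by omega, ?_⟩
  · rwa [Int.natAbs_pos, Ne, ZMod.valMinAbs_eq_zero]
  · rcases x.valMinAbs.natAbs_eq with h | h
    · exact .inl (by rw [← Int.cast_natCast, ← h, ZMod.coe_valMinAbs])
    · exact .inr (by rw [← Int.cast_natCast, ← Int.cast_neg, ← h, ZMod.coe_valMinAbs])

theorem HasSameBarQuotient.le_nonzeroResidues (h : HasSameBarQuotient t l m) (ht : Odd t)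
    (hm : (nonzeroResidues t m.parts).map Neg.neg = nonzeroResidues t m.parts)
    {N : Multiset (ZMod t)} (hN : N.map Neg.neg = N) (hNl : N ≤ nonzeroResidues t l.parts) :
    N ≤ nonzeroResidues t m.parts := by
  refine Multiset.le_iff_count.mpr fun x => ?_
  rcases eq_or_ne x 0 with rfl | hx
  · have h0 : (0 : ZMod t) ∉ N := fun h0 =>
      ne_zero_of_mem_nonzeroResidues (Multiset.mem_of_le hNl h0) rfl
    simp [Multiset.count_eq_zero_of_notMem h0]
  obtain ⟨r, hr0, hrt, hxr⟩ := exists_eq_natCast_or_eq_neg_natCast ht hx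
  obtain ⟨c, hc⟩ := h.2 r hr0 hrt
  have hle : N.count (r : ZMod t) ≤ (nonzeroResidues t m.parts).count (r : ZMod t) := by
    rcases count_nonzeroResidues_le_or_le_of_twistedRunner_eq_image hr0 (by omega) hc with hc | hc
    · exact (Multiset.count_le_of_le _ hNl).trans hc
    · rw [← count_neg_of_map_neg_eq hN, ← count_neg_of_map_neg_eq hm]
      exact (Multiset.count_le_of_le _ hNl).trans hc
  rcases hxr with rfl | rfl
  · exact hle
  · rwa [count_neg_of_map_neg_eq hN, count_neg_of_map_neg_eq hm]

end TwistedRunner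

section Signs

variable {F : Type*} [Field F] [Fintype F] [DecidableEq F]

theorem prod_quadraticChar_sq {N : Multiset F} (hN : ∀ x ∈ N, x ≠ 0) :
    (N.map (quadraticChar F)).prod ^ 2 = 1 := by
  rw [← Multiset.prod_map_pow]
  exact Multiset.prod_eq_one (by simpa using fun x hx => quadraticChar_sq_one (hN x hx))

theorem prod_quadraticChar_add_map_neg {N : Multiset F} (hN : ∀ x ∈ N, x ≠ 0) :
    ((N + N.map Neg.neg).map (quadraticChar F)).prod = quadraticChar F (-1) ^ N.card := by
  have hneg : quadraticChar F ∘ Neg.neg = fun x => quadraticChar F (-1) * quadraticChar F x := by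
    funext x
    rw [← map_mul, neg_one_mul, Function.comp_apply]
  rw [Multiset.map_add, Multiset.prod_add, Multiset.map_map, hneg, Multiset.prod_map_mul,
    Multiset.map_const', Multiset.prod_replicate]
  linear_combination quadraticChar F (-1) ^ N.card * prod_quadraticChar_sq hN

theorem quadraticChar_neg_one_pow_add_add (n d : ℕ) :
    quadraticChar F (-1) ^ (n + (n + d)) = quadraticChar F (-1) ^ d := by
  have hsq : quadraticChar F (-1) ^ 2 = 1 := quadraticChar_sq_one (neg_ne_zero.mpr one_ne_zero)
  rw [← add_assoc, ← two_mul, pow_add, pow_mul, hsq, one_pow, one_mul]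

variable {p : ℕ} [Fact p.Prime]

theorem quadraticChar_neg_one_eq_pow (hp : p ≠ 2) :
    quadraticChar (ZMod p) (-1) = (-1) ^ ((p - 1) / 2) := by
  have hodd : p % 2 = 1 := Nat.odd_iff.mp ((Fact.out : p.Prime).odd_of_ne_two hp)
  rw [quadraticChar_neg_one (by rwa [ZMod.ringChar_zmod_n]), ZMod.card,
    ZMod.χ₄_eq_neg_one_pow hodd, show p / 2 = (p - 1) / 2 by omega]

theorem BarPartition.partsProd_ne_zero (l : BarPartition) : l.partsProd ≠ 0 :=
  Finset.prod_ne_zero_iff.mpr fun _ ha h => l.zero_not_mem (h ▸ ha)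

variable {K : Type*} [Field K] [IsAlgClosed K] [CharZero K] {σ : K →+* K}

theorem BarPartition.eq_sqrtSign_partsProd {l : BarPartition} {τ : ℤ}
    (hτ : ∀ α : K, α ^ 2 = l.partsProd → σ α = τ * α) : τ = sqrtSign σ (l.partsProd : K) :=
  eq_sqrtSign (map_natCast σ _) (Nat.cast_ne_zero.mpr l.partsProd_ne_zero) hτ

theorem sqrtSign_partsProd (hp : p ≠ 2)
    (hσ : ∀ (ζ : K) (n : ℕ), 0 < n → n.Coprime p → ζ ^ n = 1 → σ ζ = ζ ^ p) (l : BarPartition) :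
    sqrtSign σ (l.partsProd : K) = (∏ a ∈ l.parts.filter (p ∣ ·), sqrtSign σ (a : K)) *
      ((nonzeroResidues p l.parts).map (quadraticChar (ZMod p))).prod := by
  have hne : ∀ a ∈ l.parts, (a : K) ≠ 0 := fun a ha =>
    Nat.cast_ne_zero.mpr fun h => l.zero_not_mem (h ▸ ha)
  rw [BarPartition.partsProd, Nat.cast_prod, sqrtSign_prod (fun a _ => map_natCast σ a) hne,
    ← Finset.prod_filter_mul_prod_filter_not l.parts (p ∣ ·), nonzeroResidues_eq_map_filter,
    Multiset.map_map]
  congr 1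
  exact Finset.prod_congr rfl fun a ha =>
    sqrtSign_natCast_eq_quadraticChar hp hσ (Finset.mem_filter.mp ha).2

theorem sqrtSign_partsProd_mul_eq_of_nonzeroResidues (hp : p ≠ 2)
    (hσ : ∀ (ζ : K) (n : ℕ), 0 < n → n.Coprime p → ζ ^ n = 1 → σ ζ = ζ ^ p)
    {l κ μ : BarPartition} {N M : Multiset (ZMod p)}
    (hl : nonzeroResidues p l.parts = nonzeroResidues p κ.parts + (N + N.map Neg.neg))
    (hμ : nonzeroResidues p μ.parts = M + M.map Neg.neg)
    (hκ : κ.parts.filter (p ∣ ·) = ∅) (hlμ : μ.parts.filter (p ∣ ·) = l.parts.filter (p ∣ ·)) :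
    sqrtSign σ (l.partsProd : K) * sqrtSign σ (κ.partsProd : K) * sqrtSign σ (μ.partsProd : K) =
      quadraticChar (ZMod p) (-1) ^ (N.card + M.card) := by
  have hN : ∀ x ∈ N, x ≠ 0 := fun x hx =>
    ne_zero_of_mem_nonzeroResidues (S := l.parts) (by simp [hl, hx])
  have hM : ∀ x ∈ M, x ≠ 0 := fun x hx =>
    ne_zero_of_mem_nonzeroResidues (S := μ.parts) (by simp [hμ, hx])
  have hdvd : (∏ a ∈ l.parts.filter (p ∣ ·), sqrtSign σ (a : K)) ^ 2 = 1 := by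
    rw [← Finset.prod_pow]
    exact Finset.prod_eq_one fun a _ => sqrtSign_sq σ (a : K)
  have hres : ((nonzeroResidues p κ.parts).map (quadraticChar (ZMod p))).prod ^ 2 = 1 :=
    prod_quadraticChar_sq fun _ => ne_zero_of_mem_nonzeroResidues
  simp only [sqrtSign_partsProd hp hσ, hl, hμ, hκ, hlμ, Finset.prod_empty, one_mul]
  rw [Multiset.map_add, Multiset.prod_add, prod_quadraticChar_add_map_neg hN,
    prod_quadraticChar_add_map_neg hM]
  generalize (∏ a ∈ l.parts.filter (p ∣ ·), sqrtSign σ (a : K)) = A at hdvd ⊢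
  generalize ((nonzeroResidues p κ.parts).map (quadraticChar (ZMod p))).prod = R at hres ⊢
  linear_combination
    quadraticChar (ZMod p) (-1) ^ (N.card + M.card) * (R ^ 2 * hdvd + hres)

theorem tau_partsProd_mul_eq_neg_one_pow_general (hp : p ≠ 2)
    (hσ : ∀ (ζ : K) (n : ℕ), 0 < n → n.Coprime p → ζ ^ n = 1 → σ ζ = ζ ^ p)
    {l κ μ : BarPartition} (hκ : Relation.ReflTransGen (BarRemoval p) l κ)
    (hκp : ∀ a ∈ κ.parts, ¬ p ∣ a) (hμ : IsBarCocoreOf p l μ) {τl τκ τμ : ℤ}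
    (hτl : ∀ α : K, α ^ 2 = l.partsProd → σ α = τl * α)
    (hτκ : ∀ α : K, α ^ 2 = κ.partsProd → σ α = τκ * α)
    (hτμ : ∀ α : K, α ^ 2 = μ.partsProd → σ α = τμ * α) :
    ∃ d : ℕ, 2 * (d : ℤ) = (κ.length : ℤ) + μ.length - l.length ∧
      τl * τκ * τμ = (-1) ^ (d * ((p - 1) / 2)) := by
  obtain ⟨N, hN⟩ := exists_nonzeroResidues_eq_add_of_reflTransGen hκ
  obtain ⟨M, hM⟩ := hμ.1.exists_nonzeroResidues_eq
  have hκ0 : κ.parts.filter (p ∣ ·) = ∅ := Finset.filter_eq_empty_iff.mpr hκp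
  have hdvd := hμ.2.filter_dvd_eq
  have hle : N + N.map Neg.neg ≤ nonzeroResidues p μ.parts :=
    hμ.2.le_nonzeroResidues ((Fact.out : p.Prime).odd_of_ne_two hp)
      (hM ▸ map_neg_add_map_neg M) (map_neg_add_map_neg N) (hN ▸ Multiset.le_add_left _ _)
  obtain ⟨d, hd⟩ := Nat.exists_eq_add_of_le (card_le_card_of_add_map_neg_le (hM ▸ hle))
  refine ⟨d, ?_, ?_⟩
  · have hlen := length_add_length_eq_of_nonzeroResidues hN hM hκ0 hdvd
    omega
  · calc τl * τκ * τμ = quadraticChar (ZMod p) (-1) ^ (N.card + M.card) := by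
          rw [BarPartition.eq_sqrtSign_partsProd hτl, BarPartition.eq_sqrtSign_partsProd hτκ,
            BarPartition.eq_sqrtSign_partsProd hτμ,
            sqrtSign_partsProd_mul_eq_of_nonzeroResidues hp hσ hN hM hκ0 hdvd]
      _ = quadraticChar (ZMod p) (-1) ^ d := by rw [hd, quadraticChar_neg_one_pow_add_add]
      _ = (-1) ^ (d * ((p - 1) / 2)) := by
          rw [quadraticChar_neg_one_eq_pow hp, ← pow_mul, mul_comm]

end Signs

/-- Let `p` be an odd prime, `λ` a bar-partition with `p`-bar core `κ` and
`p`-bar cocore `μ`, and `σ` a `σ_p`-type automorphism of `ℚ̄`. Then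
`d = (ℓ(κ) + ℓ(μ) − ℓ(λ))/2` is a nonnegative integer and
`τ(P(λ),σ)·τ(P(κ),σ)·τ(P(μ),σ) = (−1)^(d·(p−1)/2)`. -/
theorem tau_partsProd_mul_eq_neg_one_pow (p : ℕ) (hp : p.Prime) (hpodd : Odd p)
    (l κ μ : BarPartition) (hκ : IsBarCoreOf p l κ) (hμ : IsBarCocoreOf p l μ)
    (σ : Qbar ≃ₐ[ℚ] Qbar) (hσ : IsSigmaPType p σ)
    (τl τκ τμ : ℤ)
    (hτl : ∀ α : Qbar, α ^ 2 = (l.partsProd : Qbar) → σ α = (τl : Qbar) * α)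
    (hτκ : ∀ α : Qbar, α ^ 2 = (κ.partsProd : Qbar) → σ α = (τκ : Qbar) * α)
    (hτμ : ∀ α : Qbar, α ^ 2 = (μ.partsProd : Qbar) → σ α = (τμ : Qbar) * α) :
    ∃ d : ℕ, 2 * (d : ℤ) = (κ.length : ℤ) + μ.length - l.length ∧
      τl * τκ * τμ = (-1) ^ (d * ((p - 1) / 2)) := by
  have : Fact p.Prime := ⟨hp⟩
  exact tau_partsProd_mul_eq_neg_one_pow_general (σ := (σ : Qbar →+* Qbar))
    (hpodd.ne_two_of_dvd_nat dvd_rfl) hσ.1 hκ.1 (fun _ => hκ.2.not_dvd) hμ hτl hτκ hτμ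
end

section
/- Let p be an odd prime. The bar-partitions of p with empty p-bar core are exactly (p) and (p − k, k) for 1 ≤ k ≤ (p−1)/2; in particular there are (p+1)/2 of them. Moreover sgn((p)) = 1 and sgn((p − k, k)) = −1 for every 1 ≤ k ≤ (p−1)/2. -/
open scoped BigOperators

/-!
A `t`-bar removal lowers the size by exactly `t`, so a bar-partition of `t > 0` has empty `t`-bar
core if and only if a single removal empties it. Replacing a part by a smaller one never empties
a partition, so that removal deletes either the only part `t`, or the only two parts `a + b = t`.
-/

namespace BarPartition

variable {l : BarPartition}

theorem pos_of_mem_s11 {a : ℕ} (ha : a ∈ l.parts) : 0 < a :=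
  Nat.pos_of_ne_zero (ne_of_mem_of_not_mem ha l.zero_not_mem)

theorem size_empty : empty.size = 0 := Finset.sum_empty

theorem eq_empty_of_parts_eq_empty (h : l.parts = ∅) : l = empty := by
  cases l
  congr

theorem size_eq_zero_iff : l.size = 0 ↔ l = empty := by
  refine ⟨fun h ↦ eq_empty_of_parts_eq_empty ?_, fun h ↦ h ▸ size_empty⟩
  refine Finset.eq_empty_of_forall_notMem fun a ha ↦ (pos_of_mem_s11 ha).ne' ?_
  exact Finset.sum_eq_zero_iff.mp h a ha

theorem length_le_size (l : BarPartition) : l.length ≤ l.size :=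
  (Finset.card_eq_sum_ones l.parts).trans_le (Finset.sum_le_sum fun _ ↦ pos_of_mem_s11)

theorem sgn_eq_neg_one_pow_size_add_length (l : BarPartition) :
    l.sgn = (-1) ^ (l.size + l.length) := by
  have hparity : l.size + l.length = l.size - l.length + 2 * l.length := by
    have := l.length_le_size
    omega
  rw [hparity, pow_add, (even_two_mul _).neg_one_pow, mul_one, sgn]

theorem sgn_of_parts_eq_singleton {n : ℕ} (h : l.parts = {n}) : l.sgn = (-1) ^ (n + 1) := by
  rw [sgn_eq_neg_one_pow_size_add_length, size, length, h, Finset.sum_singleton,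
    Finset.card_singleton]

theorem sgn_of_parts_eq_pair {a b : ℕ} (hab : a ≠ b) (h : l.parts = {a, b}) :
    l.sgn = (-1) ^ (a + b) := by
  rw [sgn_eq_neg_one_pow_size_add_length, size, length, h, Finset.sum_pair hab,
    Finset.card_pair hab, pow_add, neg_one_sq, mul_one]

theorem exists_parts_eq_pair_iff (l : BarPartition) (t : ℕ) :
    (∃ a b, a ≠ b ∧ a + b = t ∧ l.parts = {a, b}) ↔
      ∃ k, 1 ≤ k ∧ k ≤ (t - 1) / 2 ∧ l.parts = {t - k, k} := by
  constructor
  · rintro ⟨a, b, hab, rfl, hl⟩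
    wlog hba : b < a generalizing a b
    · rw [add_comm a b]
      exact this b a hab.symm (hl.trans (Finset.pair_comm a b)) (by omega)
    have hb : 0 < b := pos_of_mem_s11 (l := l) (by simp [hl])
    exact ⟨b, hb, by omega, by rwa [Nat.add_sub_cancel]⟩
  · rintro ⟨k, hk, hkt, hl⟩
    exact ⟨t - k, k, by omega, by omega, hl⟩

end BarPartition

theorem BarRemoval.size_add {t : ℕ} {μ ν : BarPartition} (h : BarRemoval t μ ν) :
    ν.size + t = μ.size := by
  unfold BarPartition.size
  rcases h with ⟨a, ha, hta, hnot, hν⟩ | ⟨ht, hν⟩ | ⟨a, ha, b, hb, hab, rfl, hν⟩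
  · have hnot' : a - t ∉ μ.parts.erase a := mt Finset.mem_of_mem_erase hnot
    rw [hν, Finset.sum_insert hnot', ← Finset.add_sum_erase _ _ ha]
    omega
  · rw [hν, Finset.sum_erase_add _ _ ht]
  · have hb' : b ∈ μ.parts.erase a := Finset.mem_erase.mpr ⟨hab.symm, hb⟩
    rw [hν, ← Finset.add_sum_erase _ _ ha, ← Finset.add_sum_erase _ _ hb']
    ring

theorem barRemoval_empty_iff {t : ℕ} {l : BarPartition} :
    BarRemoval t l BarPartition.empty ↔
      l.parts = {t} ∨ ∃ a b, a ≠ b ∧ a + b = t ∧ l.parts = {a, b} := by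
  constructor
  · rintro (⟨a, -, -, -, h⟩ | ⟨ht, h⟩ | ⟨a, ha, b, hb, hab, hsum, h⟩)
    · exact absurd h.symm (Finset.insert_ne_empty _ _)
    · left
      rw [← Finset.insert_erase ht, ← h]
      rfl
    · right
      have hb' : b ∈ l.parts.erase a := Finset.mem_erase.mpr ⟨hab.symm, hb⟩
      refine ⟨a, b, hab, hsum, ?_⟩
      rw [← Finset.insert_erase ha, ← Finset.insert_erase hb', ← h]
      rfl
  · rintro (h | ⟨a, b, hab, hsum, h⟩)
    · refine .inr (.inl ⟨by simp [h], ?_⟩)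
      rw [h, Finset.erase_singleton, BarPartition.empty]
    · refine .inr (.inr ⟨a, by simp [h], b, by simp [h], hab, hsum, ?_⟩)
      rw [h, Finset.erase_insert (by simpa using hab), Finset.erase_singleton, BarPartition.empty]

theorem hasEmptyBarCore_iff_barRemoval_empty {t : ℕ} (ht : t ≠ 0) {l : BarPartition}
    (hl : l.size = t) : HasEmptyBarCore t l ↔ BarRemoval t l BarPartition.empty := by
  refine ⟨fun h ↦ ?_, .single⟩
  rcases h.cases_head with rfl | ⟨ν, hν, -⟩
  · exact absurd (hl.symm.trans BarPartition.size_empty) ht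
  · have hν_size : ν.size = 0 := by
      have := hν.size_add
      omega
    rwa [BarPartition.size_eq_zero_iff.mp hν_size] at hν

theorem hasEmptyBarCore_iff_of_size_eq {t : ℕ} (ht : t ≠ 0) {l : BarPartition}
    (hl : l.size = t) :
    HasEmptyBarCore t l ↔
      l.parts = {t} ∨ ∃ k, 1 ≤ k ∧ k ≤ (t - 1) / 2 ∧ l.parts = {t - k, k} := by
  rw [hasEmptyBarCore_iff_barRemoval_empty ht hl, barRemoval_empty_iff,
    l.exists_parts_eq_pair_iff]

theorem injOn_pair_sub (t : ℕ) :
    Set.InjOn (fun k ↦ ({t - k, k} : Finset ℕ)) (Set.Iic (t / 2)) := by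
  intro a ha b hb hab
  have hmem : a ∈ ({t - b, b} : Finset ℕ) := by
    rw [← show ({t - a, a} : Finset ℕ) = {t - b, b} from hab]
    simp
  simp only [Finset.mem_insert, Finset.mem_singleton, Set.mem_Iic] at hmem ha hb
  omega

theorem card_insert_singleton_image_pair_sub (t : ℕ) :
    (insert ({t} : Finset ℕ)
        ((Finset.Icc 1 ((t - 1) / 2)).image fun k ↦ ({t - k, k} : Finset ℕ))).card
      = (t - 1) / 2 + 1 := by
  have hinj : Set.InjOn (fun k ↦ ({t - k, k} : Finset ℕ)) (Finset.Icc 1 ((t - 1) / 2)) :=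
    (injOn_pair_sub t).mono fun k hk ↦ by
      rw [Finset.coe_Icc, Set.mem_Icc] at hk
      rw [Set.mem_Iic]
      omega
  have hnot : ({t} : Finset ℕ) ∉
      (Finset.Icc 1 ((t - 1) / 2)).image fun k ↦ ({t - k, k} : Finset ℕ) := by
    simp only [Finset.mem_image, Finset.mem_Icc, not_exists, not_and]
    intro k hk hkt
    have hkt' : k = t := Finset.mem_singleton.mp (hkt ▸ by simp)
    omega
  rw [Finset.card_insert_of_notMem hnot, Finset.card_image_of_injOn hinj, Nat.card_Icc,
    Nat.add_sub_cancel]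

theorem barCocores_of_size_p_general (t : ℕ) (ht : Odd t) :
    (∀ l : BarPartition, l.size = t →
      (HasEmptyBarCore t l ↔
        l.parts = {t} ∨ ∃ k : ℕ, 1 ≤ k ∧ k ≤ (t - 1) / 2 ∧ l.parts = {t - k, k})) ∧
    (insert ({t} : Finset ℕ)
        ((Finset.Icc 1 ((t - 1) / 2)).image fun k ↦ ({t - k, k} : Finset ℕ))).card
      = (t + 1) / 2 ∧
    (∀ l : BarPartition, l.parts = {t} → l.sgn = 1) ∧
    (∀ l : BarPartition, ∀ k : ℕ, 1 ≤ k → k ≤ (t - 1) / 2 → l.parts = {t - k, k} →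
      l.sgn = -1) := by
  have hpos : 0 < t := ht.pos
  refine ⟨fun l hl ↦ hasEmptyBarCore_iff_of_size_eq hpos.ne' hl, ?_, fun l hl ↦ ?_,
    fun l k hk hkt hl ↦ ?_⟩
  · rw [card_insert_singleton_image_pair_sub]
    omega
  · rw [BarPartition.sgn_of_parts_eq_singleton hl, ht.add_one.neg_one_pow]
  · rw [BarPartition.sgn_of_parts_eq_pair (by omega) hl, Nat.sub_add_cancel (by omega),
      ht.neg_one_pow]

/-- Let `p` be an odd prime. The bar-partitions of `p` with empty `p`-bar
core are exactly `(p)` and `(p − k, k)` for `1 ≤ k ≤ (p−1)/2`; in particular there are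
`(p+1)/2` of them. Moreover `sgn((p)) = 1` and `sgn((p − k, k)) = −1` for all such `k`. -/
theorem barCocores_of_size_p (p : ℕ) (hp : p.Prime) (hpodd : Odd p) :
    (∀ l : BarPartition, l.size = p →
      (HasEmptyBarCore p l ↔
        l.parts = {p} ∨ ∃ k : ℕ, 1 ≤ k ∧ k ≤ (p - 1) / 2 ∧ l.parts = {p - k, k})) ∧
    (insert ({p} : Finset ℕ)
        ((Finset.Icc 1 ((p - 1) / 2)).image fun k => ({p - k, k} : Finset ℕ))).card
      = (p + 1) / 2 ∧
    (∀ l : BarPartition, l.parts = {p} → l.sgn = 1) ∧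
    (∀ l : BarPartition, ∀ k : ℕ, 1 ≤ k → k ≤ (p - 1) / 2 → l.parts = {p - k, k} →
      l.sgn = -1) :=
  barCocores_of_size_p_general p hpodd
end
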